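/- Assume (Φ1), (Φ2), (Φ3), the symmetry a(x,y,t) = a(y,x,t), the growth conditions (f₁): |f(x,t)| ≤ c₁|t|^{q(x)−1} and (f₂): F(x,t) ≥ c₂|t|^{q(x)} with constants c₁, c₂ > 0, and q⁺ < φ⁻. Assume the continuous embedding: there is c > 0 with ‖u‖_{q(·)} ≤ c·‖u‖ for all u ∈ X; the compact embedding: every sequence (u_n) ⊂ X with sup_n ‖u_n‖ < ∞ admits a subsequence (u_{n_k}) and u ∈ X with ∫_Ω |u_{n_k}(x) − u(x)|^{q(x)} dx → 0; and that the indicator function χ_Ω of Ω belongs to X. Then there exists λ^* > 0 such that for every λ ≥ λ^* there is u ∈ X with u not almost everywhere 0, J_λ(u) < 0, and A_s(u,v) = λ·∫_Ω f(x,u(x))·v(x) dx for every v ∈ X (i.e., u is a nontrivial weak solution of the Neumann–Robin problem (𝒫_a)). -/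

import Mathlib

open MeasureTheory Set Filter
open scoped ENNReal

noncomputable section

abbrev Eucl (N : ℕ) := EuclideanSpace ℝ (Fin N)

variable {N : ℕ}

/-- `Q = ℝ^{2N} \ (CΩ)^2`. -/
def Qset (Ω : Set (Eucl N)) : Set (Eucl N × Eucl N) := (Ωᶜ ×ˢ Ωᶜ)ᶜ

/-- `φ_{x,y}(t) = a(x,y,|t|) t` for `t ≠ 0`, `φ_{x,y}(0) = 0`. -/
def phiF (a : Eucl N → Eucl N → ℝ → ℝ) (x y : Eucl N) (t : ℝ) : ℝ :=
  if t = 0 then 0 else a x y |t| * t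

/-- `Φ_{x,y}(t) = ∫₀ᵗ φ_{x,y}(τ) dτ`. -/
def PhiF (a : Eucl N → Eucl N → ℝ → ℝ) (x y : Eucl N) (t : ℝ) : ℝ :=
  ∫ τ in (0:ℝ)..t, phiF a x y τ

/-- Gagliardo-type modular on `Q` at scale `lam`. -/
def modQ (a : Eucl N → Eucl N → ℝ → ℝ) (s : ℝ) (Ω : Set (Eucl N))
    (u : Eucl N → ℝ) (lam : ℝ) : ℝ≥0∞ :=
  ∫⁻ p in Qset Ω, ENNReal.ofReal
    (PhiF a p.1 p.2 (|u p.1 - u p.2| / (lam * dist p.1 p.2 ^ s)) / dist p.1 p.2 ^ (N : ℝ))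

/-- Gagliardo-type modular on `Ω × Ω` at scale `lam`. -/
def modOO (a : Eucl N → Eucl N → ℝ → ℝ) (s : ℝ) (Ω : Set (Eucl N))
    (u : Eucl N → ℝ) (lam : ℝ) : ℝ≥0∞ :=
  ∫⁻ p in Ω ×ˢ Ω, ENNReal.ofReal
    (PhiF a p.1 p.2 (|u p.1 - u p.2| / (lam * dist p.1 p.2 ^ s)) / dist p.1 p.2 ^ (N : ℝ))

/-- modular `∫_Ω Φ̂_x(|u|/λ)`. -/
def modO (a : Eucl N → Eucl N → ℝ → ℝ) (Ω : Set (Eucl N))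
    (u : Eucl N → ℝ) (lam : ℝ) : ℝ≥0∞ :=
  ∫⁻ x in Ω, ENNReal.ofReal (PhiF a x x (|u x| / lam))

/-- modular `∫_{CΩ} β Φ̂_x(|u|/λ)`. -/
def modB (a : Eucl N → Eucl N → ℝ → ℝ) (Ω : Set (Eucl N)) (β : Eucl N → ℝ)
    (u : Eucl N → ℝ) (lam : ℝ) : ℝ≥0∞ :=
  ∫⁻ x in Ωᶜ, ENNReal.ofReal (β x * PhiF a x x (|u x| / lam))

/-- Luxemburg infimum of a modular family (`∞` if no admissible `λ`). -/
def lux (m : ℝ → ℝ≥0∞) : ℝ≥0∞ :=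
  sInf {l : ℝ≥0∞ | ∃ lam : ℝ, 0 < lam ∧ l = ENNReal.ofReal lam ∧ m lam ≤ 1}

/-- `‖u‖_X = [u]_{s,Φ,Q} + ‖u‖_{Φ̂} + ‖u‖_{Φ̂,β,CΩ}`. -/
def normX (a : Eucl N → Eucl N → ℝ → ℝ) (s : ℝ) (Ω : Set (Eucl N)) (β : Eucl N → ℝ)
    (u : Eucl N → ℝ) : ℝ≥0∞ :=
  lux (modQ a s Ω u) + lux (modO a Ω u) + lux (modB a Ω β u)

/-- the modular `ρ_s`. -/
def rhoS (a : Eucl N → Eucl N → ℝ → ℝ) (s : ℝ) (Ω : Set (Eucl N)) (β : Eucl N → ℝ)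
    (u : Eucl N → ℝ) : ℝ≥0∞ :=
  modQ a s Ω u 1 + modO a Ω u 1 + modB a Ω β u 1

/-- the modular norm `‖u‖ = inf {λ > 0 : ρ_s(u/λ) ≤ 1}`. -/
def normM (a : Eucl N → Eucl N → ℝ → ℝ) (s : ℝ) (Ω : Set (Eucl N)) (β : Eucl N → ℝ)
    (u : Eucl N → ℝ) : ℝ≥0∞ :=
  sInf {l : ℝ≥0∞ | ∃ lam : ℝ, 0 < lam ∧ l = ENNReal.ofReal lam ∧
    rhoS a s Ω β (fun x => u x / lam) ≤ 1}

/-- `X` described via the norm `‖·‖_X`. -/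
def XsetX (a : Eucl N → Eucl N → ℝ → ℝ) (s : ℝ) (Ω : Set (Eucl N)) (β : Eucl N → ℝ) :
    Set (Eucl N → ℝ) :=
  {u | Measurable u ∧ normX a s Ω β u < ⊤}

/-- `X` described via the modular norm `‖·‖`. -/
def XsetM (a : Eucl N → Eucl N → ℝ → ℝ) (s : ℝ) (Ω : Set (Eucl N)) (β : Eucl N → ℝ) :
    Set (Eucl N → ℝ) :=
  {u | Measurable u ∧ (∃ lam : ℝ, 0 < lam ∧ rhoS a s Ω β (fun x => u x / lam) < ⊤) ∧
    normM a s Ω β u < ⊤}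

/-- the fractional difference quotient `D^s u`. -/
def Du (s : ℝ) (u : Eucl N → ℝ) (p : Eucl N × Eucl N) : ℝ :=
  (u p.1 - u p.2) / dist p.1 p.2 ^ s

/-- `a(x,y,|D^s u|) D^s u`, with the convention that it vanishes when `u x = u y`. -/
def Ku (a : Eucl N → Eucl N → ℝ → ℝ) (s : ℝ) (u : Eucl N → ℝ) (p : Eucl N × Eucl N) : ℝ :=
  if u p.1 = u p.2 then 0 else a p.1 p.2 |Du s u p| * Du s u p

/-- the form `A_s(u,v)`. -/
def Aform (a : Eucl N → Eucl N → ℝ → ℝ) (s : ℝ) (Ω : Set (Eucl N)) (β : Eucl N → ℝ)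
    (u v : Eucl N → ℝ) : ℝ :=
  (1/2) * (∫ p in Qset Ω, Ku a s u p * Du s v p / dist p.1 p.2 ^ (N : ℝ))
  + (∫ x in Ω, a x x |u x| * u x * v x)
  + ∫ x in Ωᶜ, β x * (a x x |u x| * u x * v x)

/-- the nonlocal normal derivative `𝒩^s_a u` on `CΩ`. -/
def Nop (a : Eucl N → Eucl N → ℝ → ℝ) (s : ℝ) (Ω : Set (Eucl N)) (u : Eucl N → ℝ)
    (x : Eucl N) : ℝ :=
  ∫ y in Ω, Ku a s u (x, y) / dist x y ^ ((N : ℝ) + s)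

/-- `F(x,t) = ∫₀ᵗ f(x,τ) dτ`. -/
def Ff (f : Eucl N → ℝ → ℝ) (x : Eucl N) (t : ℝ) : ℝ := ∫ τ in (0:ℝ)..t, f x τ

/-- the energy functional `J_λ`. -/
def Jlam (a : Eucl N → Eucl N → ℝ → ℝ) (s : ℝ) (Ω : Set (Eucl N)) (β : Eucl N → ℝ)
    (f : Eucl N → ℝ → ℝ) (lam : ℝ) (u : Eucl N → ℝ) : ℝ :=
  (1/2) * (modQ a s Ω u 1).toReal + (modO a Ω u 1).toReal + (modB a Ω β u 1).toReal
    - lam * ∫ x in Ω, Ff f x (u x)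

/-- the variable-exponent Luxemburg norm `‖u‖_{q(·)}` on `Ω`. -/
def normq (Ω : Set (Eucl N)) (q : Eucl N → ℝ) (u : Eucl N → ℝ) : ℝ≥0∞ :=
  sInf {l : ℝ≥0∞ | ∃ lam : ℝ, 0 < lam ∧ l = ENNReal.ofReal lam ∧
    (∫⁻ x in Ω, ENNReal.ofReal (|u x / lam| ^ q x)) ≤ 1}

structure YF (G g : ℝ → ℝ) (m p : ℝ) : Prop where
  hd : ∀ t, HasDerivAt G (g t) t
  gm : Monotone g
  godd : ∀ t, g (-t) = -g t
  G0 : G 0 = 0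
  even : ∀ t, G (-t) = G t
  pos : ∀ t, t ≠ 0 → 0 < G t
  lo : ∀ t, m * G t ≤ t * g t
  hi : ∀ t, t * g t ≤ p * G t
  cl : ∀ a b, G ((a+b)/2) + G ((a-b)/2) ≤ (G a + G b)/2

namespace YF
variable {G g : ℝ → ℝ} {m p : ℝ}

theorem nonneg (h : YF G g m p) (t : ℝ) : 0 ≤ G t := by
  rcases eq_or_ne t 0 with rfl | ht
  · rw [h.G0]
  · exact (h.pos t ht).le

theorem g0 (h : YF G g m p) : g 0 = 0 := by
  have := h.godd 0; simp at this; linarith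

theorem gabs (h : YF G g m p) (t : ℝ) : |g t| = g |t| := by
  rcases le_total 0 t with ht | ht
  · rw [abs_of_nonneg ht, abs_of_nonneg]; rw [← h.g0]; exact h.gm ht
  · rw [abs_of_nonpos ht, h.godd, abs_of_nonpos]; rw [← h.g0]; exact h.gm ht

theorem Gabs (h : YF G g m p) (t : ℝ) : G |t| = G t := by
  rcases le_total 0 t with ht | ht
  · rw [abs_of_nonneg ht]
  · rw [abs_of_nonpos ht, h.even]

theorem cont (h : YF G g m p) : Continuous G :=
  continuous_iff_continuousAt.2 fun t => (h.hd t).continuousAt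

theorem monoOn (h : YF G g m p) : MonotoneOn G (Ici 0) := by
  apply monotoneOn_of_deriv_nonneg (convex_Ici 0) h.cont.continuousOn
  · intro t _; exact (h.hd t).differentiableAt.differentiableWithinAt
  · intro t ht
    rw [(h.hd t).deriv, ← h.g0]
    rw [interior_Ici] at ht
    exact h.gm (le_of_lt ht)

theorem mono (h : YF G g m p) {a b : ℝ} (hab : |a| ≤ |b|) : G a ≤ G b := by
  rw [← h.Gabs a, ← h.Gabs b]
  exact h.monoOn (mem_Ici.2 (abs_nonneg _)) (mem_Ici.2 (abs_nonneg _)) hab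

theorem up (h : YF G g m p) {K : ℝ} (hK : 1 ≤ K) (t : ℝ) : G (K * t) ≤ K ^ p * G t := by
  have hder : ∀ x ∈ Ici (1:ℝ), HasDerivAt (fun x : ℝ => x ^ (-p) * G (x * t))
      ((-p * x ^ (-p-1)) * G (x*t) + x ^ (-p) * (g (x*t) * t)) x := by
    intro x hx
    have hx0 : (0:ℝ) < x := lt_of_lt_of_le one_pos hx
    have h1 : HasDerivAt (fun x : ℝ => x ^ (-p)) (-p * x ^ (-p-1)) x :=
      Real.hasDerivAt_rpow_const (Or.inl hx0.ne')
    have h2 : HasDerivAt (fun x : ℝ => G (x * t)) (g (x*t) * t) x :=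
      (h.hd (x*t)).comp x (hasDerivAt_mul_const t)
    exact h1.mul h2
  have hanti : AntitoneOn (fun x : ℝ => x ^ (-p) * G (x * t)) (Ici 1) := by
    apply antitoneOn_of_deriv_nonpos (convex_Ici 1)
    · intro x hx; exact (hder x hx).continuousAt.continuousWithinAt
    · intro x hx; rw [interior_Ici] at hx
      exact (hder x (mem_Ici.2 (le_of_lt hx))).differentiableAt.differentiableWithinAt
    · intro x hx
      rw [interior_Ici] at hx
      have hx0 : (0:ℝ) < x := lt_trans one_pos hx
      rw [(hder x (mem_Ici.2 (le_of_lt hx))).deriv]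
      have e : x ^ (-p) = x ^ (-p-1) * x := by
        rw [← Real.rpow_add_one hx0.ne']; ring_nf
      rw [e]
      have := h.hi (x*t)
      have hp : 0 < x ^ (-p-1) := Real.rpow_pos_of_pos hx0 _
      nlinarith
  have := hanti (mem_Ici.2 le_rfl) (mem_Ici.2 hK) hK
  simp only [Real.one_rpow, one_mul] at this
  have hK0 : (0:ℝ) < K := lt_of_lt_of_le one_pos hK
  rw [Real.rpow_neg hK0.le, inv_mul_le_iff₀ (Real.rpow_pos_of_pos hK0 _)] at this
  exact this

theorem dn (h : YF G g m p) {K : ℝ} (hK : 1 ≤ K) (t : ℝ) : K ^ m * G t ≤ G (K * t) := by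
  have hder : ∀ x ∈ Ici (1:ℝ), HasDerivAt (fun x : ℝ => x ^ (-m) * G (x * t))
      ((-m * x ^ (-m-1)) * G (x*t) + x ^ (-m) * (g (x*t) * t)) x := by
    intro x hx
    have hx0 : (0:ℝ) < x := lt_of_lt_of_le one_pos hx
    have h1 : HasDerivAt (fun x : ℝ => x ^ (-m)) (-m * x ^ (-m-1)) x :=
      Real.hasDerivAt_rpow_const (Or.inl hx0.ne')
    have h2 : HasDerivAt (fun x : ℝ => G (x * t)) (g (x*t) * t) x :=
      (h.hd (x*t)).comp x (hasDerivAt_mul_const t)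
    exact h1.mul h2
  have hanti : MonotoneOn (fun x : ℝ => x ^ (-m) * G (x * t)) (Ici 1) := by
    apply monotoneOn_of_deriv_nonneg (convex_Ici 1)
    · intro x hx; exact (hder x hx).continuousAt.continuousWithinAt
    · intro x hx; rw [interior_Ici] at hx
      exact (hder x (mem_Ici.2 (le_of_lt hx))).differentiableAt.differentiableWithinAt
    · intro x hx
      rw [interior_Ici] at hx
      have hx0 : (0:ℝ) < x := lt_trans one_pos hx
      rw [(hder x (mem_Ici.2 (le_of_lt hx))).deriv]
      have e : x ^ (-m) = x ^ (-m-1) * x := by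
        rw [← Real.rpow_add_one hx0.ne']; ring_nf
      rw [e]
      have := h.lo (x*t)
      have hp : 0 < x ^ (-m-1) := Real.rpow_pos_of_pos hx0 _
      nlinarith
  have := hanti (mem_Ici.2 le_rfl) (mem_Ici.2 hK) hK
  simp only [Real.one_rpow, one_mul] at this
  have hK0 : (0:ℝ) < K := lt_of_lt_of_le one_pos hK
  rw [Real.rpow_neg hK0.le, le_inv_mul_iff₀ (Real.rpow_pos_of_pos hK0 _)] at this
  exact this

theorem sum_le (h : YF G g m p) (a b : ℝ) : G (|a| + |b|) ≤ 2 ^ p * (G a + G b) := by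
  have h2 : (0:ℝ) ≤ 2 ^ p := by positivity
  rcases le_total |a| |b| with hab | hab
  · calc G (|a|+|b|) ≤ G (2 * b) := h.mono (by
          rw [abs_of_nonneg (by positivity), abs_mul]; simp; linarith)
      _ ≤ 2 ^ p * G b := h.up (by norm_num) b
      _ ≤ _ := by nlinarith [h.nonneg a]
  · calc G (|a|+|b|) ≤ G (2 * a) := h.mono (by
          rw [abs_of_nonneg (by positivity), abs_mul]; simp; linarith)
      _ ≤ 2 ^ p * G a := h.up (by norm_num) a
      _ ≤ _ := by nlinarith [h.nonneg b]

theorem dom (h : YF G g m p) (hp : 0 ≤ p) (w k t : ℝ) (ht : |t| ≤ 1) :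
    |g (w + t * k) * k| ≤ p * 2 ^ p * (G w + G k) := by
  have h1 : |w + t * k| ≤ |w| + |k| := by
    calc _ ≤ |w| + |t * k| := abs_add_le _ _
      _ ≤ _ := by rw [abs_mul]; nlinarith [abs_nonneg k]
  have h2 : g |w + t*k| ≤ g (|w|+|k|) := h.gm h1
  have h3 := h.hi (|w|+|k|)
  have h4 := h.sum_le w k
  have h5 : 0 ≤ g (|w|+|k|) := by rw [← h.g0]; exact h.gm (by positivity)
  rw [abs_mul, h.gabs]
  calc g |w + t*k| * |k| ≤ g (|w|+|k|) * (|w|+|k|) := by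
        apply mul_le_mul h2 (by linarith [abs_nonneg w]) (abs_nonneg _) h5
    _ ≤ p * G (|w|+|k|) := by linarith
    _ ≤ p * (2 ^ p * (G w + G k)) := by gcongr
    _ = _ := by ring

end YF

theorem yf_phi {N : ℕ} (a : Eucl N → Eucl N → ℝ → ℝ) (x y : Eucl N) (φm φp : ℝ)
    (hφm : 1 < φm)
    (hmono : StrictMono (phiF a x y)) (hcont : Continuous (phiF a x y))
    (hΦ1 : ∀ t, 0 < t →
      φm ≤ t * phiF a x y t / PhiF a x y t ∧ t * phiF a x y t / PhiF a x y t ≤ φp)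
    (hΦ2 : ConvexOn ℝ (Set.Ici 0) fun t => PhiF a x y (Real.sqrt t)) :
    YF (PhiF a x y) (phiF a x y) φm φp := by
  have hodd : ∀ t, phiF a x y (-t) = - phiF a x y t := by
    intro t; unfold phiF; by_cases h : t = 0 <;> simp [h]
  have h0 : phiF a x y 0 = 0 := by simp [phiF]
  have hG0 : PhiF a x y 0 = 0 := by simp [PhiF]
  have hd : ∀ t, HasDerivAt (PhiF a x y) (phiF a x y t) t := fun t =>
    intervalIntegral.integral_hasDerivAt_right (hcont.intervalIntegrable _ _)
      hcont.stronglyMeasurable.stronglyMeasurableAtFilter hcont.continuousAt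
  have heven : ∀ t, PhiF a x y (-t) = PhiF a x y t := by
    intro t
    unfold PhiF
    have := intervalIntegral.integral_comp_neg (phiF a x y) (a := 0) (b := t)
    simp only [hodd, intervalIntegral.integral_neg, neg_zero] at this
    rw [intervalIntegral.integral_symm, ← this, neg_neg]
  have hpos' : ∀ t, 0 < t → 0 < PhiF a x y t := by
    intro t ht
    unfold PhiF
    apply intervalIntegral.intervalIntegral_pos_of_pos_on (hcont.intervalIntegrable _ _) _ ht
    intro τ hτ; rw [← h0]; exact hmono hτ.1
  have hpos : ∀ t, t ≠ 0 → 0 < PhiF a x y t := by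
    intro t ht
    rcases lt_or_gt_of_ne ht with h | h
    · rw [← heven]; exact hpos' _ (by linarith)
    · exact hpos' _ h
  have hlohi' : ∀ t, 0 < t → φm * PhiF a x y t ≤ t * phiF a x y t ∧
      t * phiF a x y t ≤ φp * PhiF a x y t := by
    intro t ht
    have := hΦ1 t ht
    rw [le_div_iff₀ (hpos' t ht), div_le_iff₀ (hpos' t ht)] at this
    exact this
  have hlohi : ∀ t, φm * PhiF a x y t ≤ t * phiF a x y t ∧
      t * phiF a x y t ≤ φp * PhiF a x y t := by
    intro t
    rcases lt_trichotomy t 0 with h | h | h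
    · have := hlohi' (-t) (by linarith)
      rw [heven, hodd] at this
      simpa using this
    · subst h; simp [hG0]
    · exact hlohi' t h
  have hsq : ∀ t, PhiF a x y (Real.sqrt (t^2)) = PhiF a x y t := by
    intro t; rw [Real.sqrt_sq_eq_abs]
    rcases le_total 0 t with ht | ht
    · rw [abs_of_nonneg ht]
    · rw [abs_of_nonpos ht, heven]
  refine ⟨hd, hmono.monotone, hodd, hG0, heven, hpos, fun t => (hlohi t).1, fun t => (hlohi t).2, ?_⟩
  intro u v
  set H := fun t => PhiF a x y (Real.sqrt t) with hH
  have H0 : H 0 = 0 := by simp [hH, hG0]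
  have hsup : ∀ r t, 0 ≤ r → 0 ≤ t → H r + H t ≤ H (r + t) := by
    intro r t hr ht
    rcases (add_nonneg hr ht).eq_or_lt with h | h
    · have h1 : r = 0 := by linarith
      have h2 : t = 0 := by linarith
      simp [h1, h2, H0]
    · have key : ∀ b c, 0 ≤ b → 0 ≤ c → 0 < b + c → H b ≤ b / (b+c) * H (b+c) := by
        intro b c hb hc hbc
        have e1 : 0 ≤ b / (b+c) := by positivity
        have e2 : 0 ≤ c / (b+c) := by positivity
        have := hΦ2.2 (mem_Ici.2 hbc.le) (mem_Ici.2 (le_refl (0:ℝ))) e1 e2 (by field_simp)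
        simp only [smul_eq_mul, mul_zero, add_zero] at this
        rw [div_mul_cancel₀ _ hbc.ne', H0] at this
        simpa using this
      have h1 := key r t hr ht h
      have h2 := key t r ht hr (by linarith)
      rw [add_comm t r] at h2
      have : r / (r+t) * H (r+t) + t/(r+t) * H (r+t) = H (r+t) := by field_simp
      linarith
  have h1 := hsup (((u+v)/2)^2) (((u-v)/2)^2) (by positivity) (by positivity)
  have h2 := hΦ2.2 (mem_Ici.2 (sq_nonneg u)) (mem_Ici.2 (sq_nonneg v))
          (by norm_num : (0:ℝ) ≤ 1/2) (by norm_num : (0:ℝ) ≤ 1/2) (by norm_num)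
  simp only [smul_eq_mul] at h2
  have e : ((u+v)/2)^2 + ((u-v)/2)^2 = 1/2 * u^2 + 1/2 * v^2 := by ring
  rw [e] at h1
  simp only [hH] at h1 h2
  rw [hsq, hsq] at h1 h2
  linarith

section modular
variable {Z : Type*} [MeasurableSpace Z]

def Imod (μ : Measure Z) (G : Z → ℝ → ℝ) (w : Z → ℝ) : ℝ≥0∞ :=
  ∫⁻ z, ENNReal.ofReal (G z (w z)) ∂μ

variable {μ : Measure Z} {G g : Z → ℝ → ℝ} {m p : ℝ}

theorem meas_comp (hG : Measurable (Function.uncurry G)) {w : Z → ℝ} (hw : Measurable w) :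
    Measurable fun z => G z (w z) :=
  hG.comp (measurable_id.prodMk hw)

theorem Imod_up (hY : ∀ z, YF (G z) (g z) m p) {K : ℝ} (hK : 1 ≤ K) (w : Z → ℝ) :
    Imod μ G (fun z => K * w z) ≤ ENNReal.ofReal (K ^ p) * Imod μ G w := by
  unfold Imod
  rw [← lintegral_const_mul' _ _ ENNReal.ofReal_ne_top]
  apply lintegral_mono
  intro z
  simp only
  rw [← ENNReal.ofReal_mul (by positivity)]
  exact ENNReal.ofReal_le_ofReal ((hY z).up hK _)

theorem Imod_dn (hY : ∀ z, YF (G z) (g z) m p) {K : ℝ} (hK : 1 ≤ K) (w : Z → ℝ) :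
    ENNReal.ofReal (K ^ m) * Imod μ G w ≤ Imod μ G (fun z => K * w z) := by
  unfold Imod
  rw [← lintegral_const_mul' _ _ ENNReal.ofReal_ne_top]
  apply lintegral_mono
  intro z
  simp only
  rw [← ENNReal.ofReal_mul (by positivity)]
  exact ENNReal.ofReal_le_ofReal ((hY z).dn hK _)

theorem Imod_mono (hY : ∀ z, YF (G z) (g z) m p) {w k : Z → ℝ} (h : ∀ z, |w z| ≤ |k z|) :
    Imod μ G w ≤ Imod μ G k :=
  lintegral_mono fun z => ENNReal.ofReal_le_ofReal ((hY z).mono (h z))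

theorem Imod_add (hY : ∀ z, YF (G z) (g z) m p) (hG : Measurable (Function.uncurry G))
    {w k : Z → ℝ} (hw : Measurable w) :
    Imod μ G (fun z => w z + k z) ≤ ENNReal.ofReal (2 ^ p) * (Imod μ G w + Imod μ G k) := by
  unfold Imod
  rw [← lintegral_add_left (meas_comp hG hw).ennreal_ofReal,
    ← lintegral_const_mul' _ _ ENNReal.ofReal_ne_top]
  apply lintegral_mono
  intro z
  simp only
  rw [← ENNReal.ofReal_add ((hY z).nonneg _) ((hY z).nonneg _),
    ← ENNReal.ofReal_mul (by positivity)]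
  refine ENNReal.ofReal_le_ofReal (le_trans ((hY z).mono ?_) ((hY z).sum_le _ _))
  rw [abs_of_nonneg (by positivity : 0 ≤ |w z| + |k z|)]
  exact abs_add_le _ _

theorem Imod_cl (hY : ∀ z, YF (G z) (g z) m p) (hG : Measurable (Function.uncurry G))
    {w k : Z → ℝ} (hw : Measurable w) (hk : Measurable k) :
    Imod μ G (fun z => (w z + k z)/2) + Imod μ G (fun z => (w z - k z)/2) ≤
      ENNReal.ofReal (1/2) * (Imod μ G w + Imod μ G k) := by
  have hm : Measurable fun z => (w z + k z)/2 := (hw.add hk).div_const 2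
  unfold Imod
  rw [← lintegral_add_left (meas_comp hG hw).ennreal_ofReal,
    ← lintegral_const_mul' _ _ ENNReal.ofReal_ne_top,
    ← lintegral_add_left (meas_comp hG hm).ennreal_ofReal]
  apply lintegral_mono
  intro z
  simp only
  rw [← ENNReal.ofReal_add ((hY z).nonneg _) ((hY z).nonneg _),
    ← ENNReal.ofReal_add ((hY z).nonneg _) ((hY z).nonneg _),
    ← ENNReal.ofReal_mul (by positivity)]
  refine ENNReal.ofReal_le_ofReal ?_
  have := (hY z).cl (w z) (k z)
  linarith

theorem Imod_cl_real (hY : ∀ z, YF (G z) (g z) m p) (hG : Measurable (Function.uncurry G))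
    {w k : Z → ℝ} (hw : Measurable w) (hk : Measurable k)
    (hw' : Imod μ G w ≠ ⊤) (hk' : Imod μ G k ≠ ⊤) :
    (Imod μ G (fun z => (w z + k z)/2)).toReal + (Imod μ G (fun z => (w z - k z)/2)).toReal ≤
      ((Imod μ G w).toReal + (Imod μ G k).toReal)/2 := by
  have h := Imod_cl (μ := μ) hY hG hw hk
  have hfin : ENNReal.ofReal (1/2) * (Imod μ G w + Imod μ G k) ≠ ⊤ :=
    ENNReal.mul_ne_top ENNReal.ofReal_ne_top (ENNReal.add_ne_top.2 ⟨hw', hk'⟩)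
  have h3 := ne_top_of_le_ne_top hfin h
  have h4 := ENNReal.toReal_mono hfin h
  rw [ENNReal.toReal_add (ENNReal.add_ne_top.1 h3).1 (ENNReal.add_ne_top.1 h3).2,
    ENNReal.toReal_mul, ENNReal.toReal_add hw' hk', ENNReal.toReal_ofReal (by norm_num)] at h4
  linarith

theorem Imod_integrable (hY : ∀ z, YF (G z) (g z) m p) (hG : Measurable (Function.uncurry G))
    {w : Z → ℝ} (hw : Measurable w) (hw' : Imod μ G w ≠ ⊤) :
    Integrable (fun z => G z (w z)) μ := by
  refine ⟨(meas_comp hG hw).aestronglyMeasurable, ?_⟩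
  rw [hasFiniteIntegral_iff_ofReal (ae_of_all _ fun z => (hY z).nonneg _)]
  exact lt_top_iff_ne_top.2 hw'

theorem Imod_integral (hY : ∀ z, YF (G z) (g z) m p) (hG : Measurable (Function.uncurry G))
    {w : Z → ℝ} (hw : Measurable w) :
    ∫ z, G z (w z) ∂μ = (Imod μ G w).toReal :=
  integral_eq_lintegral_of_nonneg_ae (ae_of_all _ fun z => (hY z).nonneg _)
    (meas_comp hG hw).aestronglyMeasurable

theorem Imod_deriv (hY : ∀ z, YF (G z) (g z) m p) (hp : 0 ≤ p)
    (hG : Measurable (Function.uncurry G)) (hg : Measurable (Function.uncurry g))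
    {w k : Z → ℝ} (hw : Measurable w) (hk : Measurable k)
    (hw' : Imod μ G w ≠ ⊤) (hk' : Imod μ G k ≠ ⊤) :
    Integrable (fun z => g z (w z) * k z) μ ∧
    HasDerivAt (fun t : ℝ => ∫ z, G z (w z + t * k z) ∂μ) (∫ z, g z (w z) * k z ∂μ) 0 := by
  have key := hasDerivAt_integral_of_dominated_loc_of_deriv_le (μ := μ) (x₀ := (0:ℝ))
    (F := fun t z => G z (w z + t * k z)) (F' := fun t z => g z (w z + t * k z) * k z)
    (s := Metric.ball (0:ℝ) 1)
    (bound := fun z => p * 2 ^ p * (G z (w z) + G z (k z)))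
    (Metric.ball_mem_nhds _ one_pos)
    (Eventually.of_forall fun t =>
      (meas_comp hG (hw.add (hk.const_mul t))).aestronglyMeasurable)
    (by simpa using Imod_integrable hY hG hw hw')
    ((meas_comp hg (hw.add (hk.const_mul 0))).mul hk).aestronglyMeasurable
    (ae_of_all _ fun z t ht => by
      rw [Metric.mem_ball, dist_zero_right, Real.norm_eq_abs] at ht
      exact (hY z).dom hp _ _ _ ht.le)
    (((Imod_integrable hY hG hw hw').add (Imod_integrable hY hG hk hk')).const_mul _)
    (ae_of_all _ fun z t ht => by
      have h2 : HasDerivAt (fun t : ℝ => w z + t * k z) (k z) t := by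
        simpa using (hasDerivAt_mul_const (x := t) (k z)).const_add (w z)
      exact ((hY z).hd _).comp t h2)
  simpa using key

theorem Imod_cauchy (hY : ∀ z, YF (G z) (g z) m p)
    (hG : Measurable (Function.uncurry G)) {w : ℕ → Z → ℝ} (hw : ∀ k, Measurable (w k))
    (h : ∀ k, Imod μ G (fun z => (w (k+1) z - w k z)/2) ≤
      ENNReal.ofReal ((((2:ℝ) ^ (k+1)) ^ p)⁻¹ * (1/2) ^ k)) :
    ∀ᵐ z ∂μ, ∃ l, Tendsto (fun k => w k z) atTop (nhds l) := by
  have h1 : ∀ k, Imod μ G (fun z => 2 ^ (k+1) * ((w (k+1) z - w k z)/2)) ≤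
      ENNReal.ofReal ((1/2) ^ k) := by
    intro k
    have hpos : (0:ℝ) < ((2:ℝ) ^ (k+1)) ^ p := by positivity
    calc _ ≤ ENNReal.ofReal (((2:ℝ) ^ (k+1)) ^ p) * Imod μ G (fun z => (w (k+1) z - w k z)/2) :=
          Imod_up hY (one_le_pow₀ (by norm_num)) _
      _ ≤ ENNReal.ofReal (((2:ℝ) ^ (k+1)) ^ p) *
          ENNReal.ofReal ((((2:ℝ) ^ (k+1)) ^ p)⁻¹ * (1/2) ^ k) := by gcongr; exact h k
      _ = _ := by
        rw [← ENNReal.ofReal_mul hpos.le, mul_inv_cancel_left₀ hpos.ne']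
  have hm : ∀ k : ℕ, Measurable fun z => (2:ℝ) ^ (k+1) * ((w (k+1) z - w k z)/2) := fun k =>
    (((hw (k+1)).sub (hw k)).div_const 2).const_mul _
  have hfin : ∫⁻ z, ∑' k, ENNReal.ofReal (G z (2 ^ (k+1) * ((w (k+1) z - w k z)/2))) ∂μ ≠ ⊤ := by
    rw [lintegral_tsum fun k => (meas_comp hG (hm k)).ennreal_ofReal.aemeasurable]
    refine ne_top_of_le_ne_top ?_ (ENNReal.tsum_le_tsum h1)
    rw [← ENNReal.ofReal_tsum_of_nonneg (fun n => by positivity) summable_geometric_two]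
    exact ENNReal.ofReal_ne_top
  have hae := ae_lt_top' (AEMeasurable.tsum fun k =>
    (meas_comp hG (hm k)).ennreal_ofReal.aemeasurable) hfin
  filter_upwards [hae] with z hz
  have ht := ENNReal.tendsto_atTop_zero_of_tsum_ne_top hz.ne
  have hpos : 0 < ENNReal.ofReal (G z 1) := ENNReal.ofReal_pos.2 ((hY z).pos 1 one_ne_zero)
  have hev := ht.eventually_lt_const hpos
  have hev2 : ∀ᶠ k : ℕ in atTop, ‖w (k+1) z - w k z‖ ≤ (1/2:ℝ) ^ k := by
    filter_upwards [hev] with k hk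
    have hlt : |2 ^ (k+1) * ((w (k+1) z - w k z)/2)| < 1 := by
      by_contra hcon
      push Not at hcon
      exact absurd (ENNReal.ofReal_le_ofReal ((hY z).mono (by simpa using hcon))) (not_le.2 hk)
    have e : (2:ℝ) ^ (k+1) * ((w (k+1) z - w k z)/2) = 2 ^ k * (w (k+1) z - w k z) := by
      rw [pow_succ]; ring
    rw [e, abs_mul, abs_of_pos (by positivity)] at hlt
    rw [Real.norm_eq_abs, one_div, inv_pow, ← one_div, le_div_iff₀ (by positivity)]
    linarith
  have hs : Summable fun k => w (k+1) z - w k z :=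
    Summable.of_norm_bounded_eventually_nat summable_geometric_two hev2
  have hs' : Summable fun k => dist (w k z) (w (k+1) z) := by
    have := hs.norm
    refine this.congr fun k => ?_
    rw [dist_comm, dist_eq_norm]
  exact cauchySeq_tendsto_of_complete (cauchySeq_of_summable_dist hs')

theorem Imod_fatou (hY : ∀ z, YF (G z) (g z) m p)
    (hG : Measurable (Function.uncurry G)) {w : ℕ → Z → ℝ} (hw : ∀ k, Measurable (w k))
    {w₀ : Z → ℝ} (hlim : ∀ᵐ z ∂μ, Tendsto (fun k => w k z) atTop (nhds (w₀ z)))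
    {r : ℕ → ℝ} {r₀ : ℝ} (hr : Tendsto r atTop (nhds r₀))
    (hb : ∀ k, Imod μ G (w k) ≤ ENNReal.ofReal (r k)) :
    Imod μ G w₀ ≤ ENNReal.ofReal r₀ := by
  have h1 : Imod μ G w₀ = ∫⁻ z, liminf (fun k => ENNReal.ofReal (G z (w k z))) atTop ∂μ := by
    apply lintegral_congr_ae
    filter_upwards [hlim] with z hz
    refine (Tendsto.liminf_eq ?_).symm
    exact ENNReal.tendsto_ofReal (((hY z).cont.tendsto _).comp hz)
  rw [h1]
  calc _ ≤ liminf (fun k => Imod μ G (w k)) atTop :=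
        lintegral_liminf_le fun k => (meas_comp hG (hw k)).ennreal_ofReal
    _ ≤ liminf (fun k => ENNReal.ofReal (r k)) atTop :=
        liminf_le_liminf (Eventually.of_forall hb)
    _ = _ := (ENNReal.tendsto_ofReal hr).liminf_eq

end modular

theorem exists_hull_cauchy {V : Type*} [AddCommGroup V] [Module ℝ V] (r : V → ℝ)
    (hr : ∀ v, 0 ≤ r v) (S : Set V) (hS : Convex ℝ S)
    (hcl : ∀ v ∈ S, ∀ w ∈ S, r ((1/2:ℝ) • (v + w)) + r ((1/2:ℝ) • (v - w)) ≤ (r v + r w)/2)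
    (u : ℕ → V) (hu : ∀ n, u n ∈ S) (B : ℝ) (hB : ∀ n, r (u n) ≤ B) :
    ∃ v : ℕ → V, (∀ n, v n ∈ convexHull ℝ (u '' Ici n)) ∧
      (∀ n, r (v n) ≤ r (u n) + 1/((n:ℝ)+1)) ∧
      ∀ ε > 0, ∃ n₀, ∀ n ≥ n₀, ∀ k ≥ n, r ((1/2:ℝ) • (v k - v n)) ≤ ε := by
  set C : ℕ → Set V := fun n => convexHull ℝ (u '' Ici n) with hC
  have hCanti : ∀ n k, n ≤ k → C k ⊆ C n := fun n k h =>
    convexHull_mono (image_mono (Ici_subset_Ici.2 h))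
  have hCS : ∀ n, C n ⊆ S := fun n =>
    convexHull_min (by rintro _ ⟨i, _, rfl⟩; exact hu i) hS
  have huC : ∀ n, u n ∈ C n := fun n => subset_convexHull ℝ _ ⟨n, mem_Ici.2 le_rfl, rfl⟩
  set d : ℕ → ℝ := fun n => sInf (r '' C n) with hd
  have hbdd : ∀ n, BddBelow (r '' C n) := fun n => ⟨0, by rintro _ ⟨v, _, rfl⟩; exact hr v⟩
  have hdle : ∀ n, ∀ v ∈ C n, d n ≤ r v := fun n v hv => csInf_le (hbdd n) ⟨v, hv, rfl⟩
  have hdmono : Monotone d := fun n k h =>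
    csInf_le_csInf (hbdd n) ⟨_, _, huC k, rfl⟩ (image_mono (hCanti n k h))
  have hdB : BddAbove (range d) := ⟨B, by rintro _ ⟨n, rfl⟩; exact (hdle n _ (huC n)).trans (hB n)⟩
  have hdt := tendsto_atTop_ciSup hdmono hdB
  have hex : ∀ n : ℕ, ∃ v ∈ C n, r v < d n + 1/((n:ℝ)+1) := by
    intro n
    obtain ⟨_, ⟨v, hv, rfl⟩, hlt⟩ := exists_lt_of_csInf_lt (s := r '' C n) ⟨_, _, huC n, rfl⟩
      (lt_add_of_pos_right (d n) (by positivity : 0 < 1/((n:ℝ)+1)))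
    exact ⟨v, hv, hlt⟩
  choose v hv hvr using hex
  refine ⟨v, hv, fun n => (hvr n).le.trans (by gcongr; exact hdle n _ (huC n)), ?_⟩
  intro ε hε
  set D := ⨆ n, d n
  have hdD : ∀ n, d n ≤ D := fun n => le_ciSup hdB n
  have h1 : ∀ᶠ n in atTop, D - ε/2 < d n := hdt.eventually_const_lt (by linarith)
  have h2 : ∀ᶠ n : ℕ in atTop, 1/((n:ℝ)+1) < ε/2 :=
    tendsto_one_div_add_atTop_nhds_zero_nat.eventually_lt_const (by linarith)
  obtain ⟨n₀, hn₀⟩ := (h1.and h2).exists_forall_of_atTop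
  refine ⟨n₀, fun n hn k hk => ?_⟩
  have hvk : v k ∈ C n := hCanti n k hk (hv k)
  have hmid : (1/2:ℝ) • (v k + v n) ∈ C n := by
    rw [smul_add]
    exact (convex_convexHull ℝ _) hvk (hv n) (by norm_num) (by norm_num) (by norm_num)
  have a1 := hdle n _ hmid
  have a2 := hcl _ (hCS n hvk) _ (hCS n (hv n))
  have a3 := hvr n
  have a4 := hvr k
  have a5 := hdD n
  have a6 := hdD k
  obtain ⟨a7, a8⟩ := hn₀ n hn
  have a9 := (hn₀ k (hn.le.trans hk)).2
  linarith

theorem meas_of_carath {α : Type*} [MeasurableSpace α] {h : α → ℝ → ℝ}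
    (hc : ∀ x, Continuous (h x)) (hm : ∀ t, Measurable fun x => h x t) :
    Measurable (Function.uncurry h) := by
  have := measurable_uncurry_of_continuous_of_measurable (u := fun t x => h x t) hc hm
  exact this.comp measurable_swap

theorem meas_prim {α : Type*} [MeasurableSpace α] {h : α → ℝ → ℝ}
    (hc : ∀ x, Continuous (h x)) (hm : Measurable (Function.uncurry h)) :
    Measurable (Function.uncurry fun x t => ∫ τ in (0:ℝ)..t, h x τ) := by
  apply meas_of_carath
  · intro x
    exact intervalIntegral.continuous_primitive (fun _ _ => (hc x).intervalIntegrable _ _) 0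
  · intro t
    unfold intervalIntegral
    exact (hm.stronglyMeasurable.integral_prod_right.measurable).sub
      (hm.stronglyMeasurable.integral_prod_right.measurable)

abbrev ZT (N : ℕ) := (Eucl N × Eucl N) ⊕ Eucl N

def ptZ : ZT N → Eucl N × Eucl N := Sum.elim id (fun x => (x, x))

def GZ (a : Eucl N → Eucl N → ℝ → ℝ) (z : ZT N) : ℝ → ℝ := PhiF a (ptZ z).1 (ptZ z).2
def gZ (a : Eucl N → Eucl N → ℝ → ℝ) (z : ZT N) : ℝ → ℝ := phiF a (ptZ z).1 (ptZ z).2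

def TZ (s : ℝ) (u : Eucl N → ℝ) : ZT N → ℝ := Sum.elim (Du s u) u

def wQ (p : Eucl N × Eucl N) : ℝ := 1 / 2 / dist p.1 p.2 ^ (N : ℝ)

def muZ (Ω : Set (Eucl N)) (β : Eucl N → ℝ) : Measure (ZT N) :=
  ((volume.restrict (Qset Ω)).withDensity fun p => ENNReal.ofReal (wQ p)).map Sum.inl +
  ((volume.restrict Ω) + (volume.restrict Ωᶜ).withDensity fun x => ENNReal.ofReal (β x)).map Sum.inr

theorem emb_inl : MeasurableEmbedding (Sum.inl : Eucl N × Eucl N → ZT N) where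
  injective := Sum.inl_injective
  measurable := measurable_inl
  measurableSet_image' := fun _ => MeasurableSet.inl_image

theorem emb_inr : MeasurableEmbedding (Sum.inr : Eucl N → ZT N) where
  injective := Sum.inr_injective
  measurable := measurable_inr
  measurableSet_image' := fun _ h => measurableSet_inr_image.2 h

theorem meas_ptZ : Measurable (ptZ (N := N)) :=
  measurable_fun_sum measurable_id (measurable_id.prodMk measurable_id)

theorem meas_Du (s : ℝ) {u : Eucl N → ℝ} (hu : Measurable u) : Measurable (Du s u) := by
  unfold Du
  exact ((hu.comp measurable_fst).sub (hu.comp measurable_snd)).div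
    ((measurable_fst.dist measurable_snd).pow_const s)

theorem meas_wQ : Measurable (wQ (N := N)) := by
  unfold wQ
  exact measurable_const.div ((measurable_fst.dist measurable_snd).pow_const _)

theorem meas_TZ (s : ℝ) {u : Eucl N → ℝ} (hu : Measurable u) : Measurable (TZ s u) :=
  measurable_fun_sum (meas_Du s hu) hu

theorem meas_gZ {a : Eucl N → Eucl N → ℝ → ℝ}
    (ha : Measurable fun p : Eucl N × Eucl N × ℝ => a p.1 p.2.1 p.2.2) :
    Measurable (Function.uncurry (gZ a)) := by
  unfold gZ phiF Function.uncurry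
  have h1 : Measurable fun p : ZT N × ℝ => (ptZ p.1).1 := (meas_ptZ.comp measurable_fst).fst
  have h2 : Measurable fun p : ZT N × ℝ => (ptZ p.1).2 := (meas_ptZ.comp measurable_fst).snd
  refine Measurable.ite (measurable_snd (measurableSet_singleton 0)) measurable_const ?_
  refine Measurable.mul ?_ measurable_snd
  exact ha.comp (h1.prodMk (h2.prodMk measurable_snd.abs))

theorem meas_GZ {a : Eucl N → Eucl N → ℝ → ℝ}
    (ha : Measurable fun p : Eucl N × Eucl N × ℝ => a p.1 p.2.1 p.2.2)
    (hcont : ∀ x y, Continuous (phiF a x y)) :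
    Measurable (Function.uncurry (GZ a)) :=
  meas_prim (h := gZ a) (fun _ => hcont _ _) (meas_gZ ha)

theorem TZ_add (s : ℝ) (u v : Eucl N → ℝ) (z : ZT N) :
    TZ s (u + v) z = TZ s u z + TZ s v z := by
  rcases z with p | x
  · simp [TZ, Du]; ring
  · simp [TZ]

theorem TZ_smul (s c : ℝ) (u : Eucl N → ℝ) (z : ZT N) :
    TZ s (c • u) z = c * TZ s u z := by
  rcases z with p | x
  · simp [TZ, Du]; ring
  · simp [TZ]

theorem TZ_sub (s : ℝ) (u v : Eucl N → ℝ) (z : ZT N) :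
    TZ s (u - v) z = TZ s u z - TZ s v z := by
  rcases z with p | x
  · simp [TZ, Du]; ring
  · simp [TZ]

def En (a : Eucl N → Eucl N → ℝ → ℝ) (s : ℝ) (Ω : Set (Eucl N)) (β : Eucl N → ℝ)
    (u : Eucl N → ℝ) : ℝ≥0∞ := Imod (muZ Ω β) (GZ a) (TZ s u)

theorem En_eq {a : Eucl N → Eucl N → ℝ → ℝ} {φm φp : ℝ} {s : ℝ} {Ω : Set (Eucl N)}
    {β : Eucl N → ℝ}
    (hY : ∀ z, YF (GZ a z) (gZ a z) φm φp) (hG : Measurable (Function.uncurry (GZ a)))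
    (hβm : Measurable β) (hβ0 : ∀ᵐ x ∂(volume.restrict Ωᶜ), 0 ≤ β x)
    {u : Eucl N → ℝ} (hu : Measurable u) :
    En a s Ω β u = ENNReal.ofReal (1/2) * modQ a s Ω u 1 + modO a Ω u 1 + modB a Ω β u 1 := by
  have hm : Measurable fun z => ENNReal.ofReal (GZ a z (TZ s u z)) :=
    (meas_comp hG (meas_TZ s hu)).ennreal_ofReal
  have hm1 : Measurable fun p => ENNReal.ofReal (GZ a (Sum.inl p) (TZ s u (Sum.inl p))) :=
    hm.comp measurable_inl
  have hm2 : Measurable fun p => ENNReal.ofReal (GZ a (Sum.inr p) (TZ s u (Sum.inr p))) :=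
    hm.comp measurable_inr
  unfold En Imod muZ
  rw [lintegral_add_measure, lintegral_map hm measurable_inl, lintegral_map hm measurable_inr,
    lintegral_add_measure,
    lintegral_withDensity_eq_lintegral_mul _ meas_wQ.ennreal_ofReal hm1,
    lintegral_withDensity_eq_lintegral_mul _ hβm.ennreal_ofReal hm2, add_assoc]
  have hev : ∀ x (t : ℝ), PhiF a x x |t| = PhiF a x x t := fun x t => (hY (Sum.inr x)).Gabs t
  have hev' : ∀ (p : Eucl N × Eucl N) (t : ℝ), PhiF a p.1 p.2 |t| = PhiF a p.1 p.2 t :=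
    fun p t => (hY (Sum.inl p)).Gabs t
  congr 1
  · unfold modQ
    rw [← lintegral_const_mul' _ _ ENNReal.ofReal_ne_top]
    apply lintegral_congr
    intro p
    simp only [Pi.mul_apply]
    rw [← ENNReal.ofReal_mul (by unfold wQ; positivity), ← ENNReal.ofReal_mul (by norm_num)]
    congr 1
    have e : |u p.1 - u p.2| / (1 * dist p.1 p.2 ^ s) = |Du s u p| := by
      unfold Du; rw [one_mul, abs_div, abs_of_nonneg (a := dist p.1 p.2 ^ s) (by positivity)]
    rw [e, hev']
    simp only [GZ, TZ, ptZ, wQ, Sum.elim_inl, id]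
    ring
  · congr 1
    · unfold modO
      apply lintegral_congr
      intro x
      rw [div_one, hev]; rfl
    · unfold modB
      apply lintegral_congr_ae
      filter_upwards [hβ0] with x hx
      simp only [Pi.mul_apply]
      rw [div_one, hev, ENNReal.ofReal_mul hx]; rfl

theorem Aform_eq {a : Eucl N → Eucl N → ℝ → ℝ} {s : ℝ} {Ω : Set (Eucl N)}
    {β : Eucl N → ℝ}
    (hβm : Measurable β) (hβ0 : ∀ᵐ x ∂(volume.restrict Ωᶜ), 0 ≤ β x) (hs : 0 < s)
    {u v : Eucl N → ℝ}
    (hIntg : Integrable (fun z => gZ a z (TZ s u z) * TZ s v z) (muZ Ω β)) :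
    ∫ z, gZ a z (TZ s u z) * TZ s v z ∂(muZ Ω β) = Aform a s Ω β u v := by
  unfold muZ at *
  have hphi : ∀ x, phiF a x x (u x) = a x x |u x| * u x := by
    intro x; unfold phiF; split_ifs with h <;> simp [h]
  have hI1 := hIntg.left_of_add_measure
  have hI2 := hIntg.right_of_add_measure
  rw [integral_add_measure hI1 hI2, emb_inl.integral_map,
    emb_inr.integral_map]
  rw [emb_inr.integrable_map_iff] at hI2
  simp only [Function.comp_def] at hI2
  rw [integral_add_measure hI2.left_of_add_measure hI2.right_of_add_measure,
    integral_withDensity_eq_integral_toReal_smul meas_wQ.ennreal_ofReal (by simp),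
    integral_withDensity_eq_integral_toReal_smul hβm.ennreal_ofReal (by simp)]
  unfold Aform
  rw [← integral_const_mul, add_assoc]
  congr 1
  · congr 1
    ext p
    rw [ENNReal.toReal_ofReal (by unfold wQ; positivity)]
    simp only [gZ, TZ, ptZ, wQ, Sum.elim_inl, id, smul_eq_mul]
    have : phiF a p.1 p.2 (Du s u p) = Ku a s u p := by
      unfold phiF Ku
      by_cases h : u p.1 = u p.2
      · simp [h, Du]
      · have h1 : Du s u p ≠ 0 := by
          unfold Du
          refine div_ne_zero (sub_ne_zero.2 h) ?_
          have : 0 < dist p.1 p.2 := dist_pos.2 fun e => h (by rw [e])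
          positivity
        simp [h, h1]
    rw [this]; ring
  · congr 1
    · congr 1; ext x
      simp only [gZ, TZ, ptZ, Sum.elim_inr]
      rw [hphi]
    · apply integral_congr_ae
      filter_upwards [hβ0] with x hx
      simp only [gZ, TZ, ptZ, Sum.elim_inr, smul_eq_mul]
      rw [hphi, ENNReal.toReal_ofReal hx]

theorem ae_conv {s : ℝ} {Ω : Set (Eucl N)} {β : Eucl N → ℝ} (hΩo : IsOpen Ω)
    (hΩne : Ω.Nonempty) {v : ℕ → Eucl N → ℝ}
    (h : ∀ᵐ z ∂(muZ Ω β), ∃ l, Tendsto (fun k => TZ s (v k) z) atTop (nhds l)) :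
    ∀ᵐ x : Eucl N, ∃ l, Tendsto (fun k => v k x) atTop (nhds l) := by
  unfold muZ at h
  rw [ae_add_measure_iff, emb_inl.ae_map_iff, emb_inr.ae_map_iff,
    ae_add_measure_iff, ae_withDensity_iff meas_wQ.ennreal_ofReal] at h
  obtain ⟨h1, h2, -⟩ := h
  rw [ae_restrict_iff' hΩo.measurableSet] at h2
  have hQ : MeasurableSet (Qset Ω) :=
    (hΩo.measurableSet.compl.prod hΩo.measurableSet.compl).compl
  rw [ae_restrict_iff' hQ, Measure.volume_eq_prod] at h1
  have h3 := Measure.ae_ae_of_ae_prod h1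
  filter_upwards [h2, h3] with y hy2 hy3
  by_cases hy : y ∈ Ω
  · exact hy2 hy
  · have hpos : volume Ω ≠ 0 := (hΩo.measure_pos volume hΩne).ne'
    have : ∃ x ∈ Ω, (∃ l, Tendsto (fun k => v k x) atTop (nhds l)) ∧
        (∃ l, Tendsto (fun k => Du s (v k) (y, x)) atTop (nhds l)) := by
      by_contra hcon
      push Not at hcon
      apply hpos
      rw [measure_eq_zero_iff_ae_notMem]
      filter_upwards [h2, hy3] with x hx1 hx2 hx
      obtain ⟨l, hl⟩ := hx1 hx
      have hne : y ≠ x := fun e => hy (e ▸ hx)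
      have hd : 0 < dist y x := dist_pos.2 hne
      obtain ⟨l', hl'⟩ := hx2 (by simp [Qset, hx]) (by
        rw [ne_eq, ENNReal.ofReal_eq_zero, not_le]; unfold wQ; simp only; positivity)
      exact hcon x hx ⟨l, hl⟩ l' hl'
    obtain ⟨x, hx, ⟨l, hl⟩, ⟨l', hl'⟩⟩ := this
    have hne : y ≠ x := fun e => hy (e ▸ hx)
    have hd : 0 < dist y x ^ s := Real.rpow_pos_of_pos (dist_pos.2 hne) _
    refine ⟨l' * dist y x ^ s + l, ?_⟩
    refine ((hl'.mul_const (dist y x ^ s)).add hl).congr fun k => ?_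
    simp only [Du]
    rw [div_mul_cancel₀ _ hd.ne']; ring

theorem ae_TZ {s : ℝ} {Ω : Set (Eucl N)} {β : Eucl N → ℝ} {v : ℕ → Eucl N → ℝ} {u : Eucl N → ℝ}
    (h : ∀ᵐ x : Eucl N, Tendsto (fun k => v k x) atTop (nhds (u x))) :
    ∀ᵐ z ∂(muZ Ω β), Tendsto (fun k => TZ s (v k) z) atTop (nhds (TZ s u z)) := by
  unfold muZ
  rw [ae_add_measure_iff, emb_inl.ae_map_iff, emb_inr.ae_map_iff,
    ae_add_measure_iff]
  refine ⟨?_, ?_, ?_⟩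
  · refine (withDensity_absolutelyContinuous _ _).ae_le (ae_restrict_of_ae ?_)
    rw [Measure.volume_eq_prod]
    filter_upwards [Measure.quasiMeasurePreserving_fst.ae h,
      Measure.quasiMeasurePreserving_snd.ae h] with p h1 h2
    exact (h1.sub h2).div_const _
  · exact ae_restrict_of_ae h
  · exact (withDensity_absolutelyContinuous _ _).ae_le (ae_restrict_of_ae h)

structure Setup (Ω : Set (Eucl N)) (s : ℝ) (a : Eucl N → Eucl N → ℝ → ℝ) (β : Eucl N → ℝ)
    (φm φp : ℝ) (q : Eucl N → ℝ) (qp : ℝ) (f : Eucl N → ℝ → ℝ) (c₁ c : ℝ) : Prop where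
  hΩo : IsOpen Ω
  hΩne : Ω.Nonempty
  hY : ∀ z, YF (GZ a z) (gZ a z) φm φp
  hG : Measurable (Function.uncurry (GZ a))
  hg : Measurable (Function.uncurry (gZ a))
  hβm : Measurable β
  hβ0 : ∀ᵐ x ∂(volume.restrict Ωᶜ), 0 ≤ β x
  hm : 1 < φm
  hmp : φm ≤ φp
  hqm : AEMeasurable q (volume.restrict Ω)
  hq1 : ∀ x ∈ Ω, 1 < q x
  hq2 : ∀ x ∈ Ω, q x ≤ qp
  hf : Measurable (Function.uncurry f)
  hF : Measurable (Function.uncurry (Ff f))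
  hfd : ∀ x t, HasDerivAt (Ff f x) (f x t) t
  hc₁ : 0 < c₁
  hf1 : ∀ x ∈ Ω, ∀ t : ℝ, |f x t| ≤ c₁ * |t| ^ (q x - 1)
  hqpφ : qp < φm
  hc : 0 < c
  hemb : ∀ u ∈ XsetM a s Ω β, normq Ω q u ≤ ENNReal.ofReal c * normM a s Ω β u

def Jr (a : Eucl N → Eucl N → ℝ → ℝ) (s : ℝ) (Ω : Set (Eucl N)) (β : Eucl N → ℝ)
    (f : Eucl N → ℝ → ℝ) (lam : ℝ) (u : Eucl N → ℝ) : ℝ :=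
  (En a s Ω β u).toReal - lam * ∫ x in Ω, Ff f x (u x)

namespace Setup
variable {Ω : Set (Eucl N)} {s : ℝ} {a : Eucl N → Eucl N → ℝ → ℝ} {β : Eucl N → ℝ}
    {φm φp : ℝ} {q : Eucl N → ℝ} {qp : ℝ} {f : Eucl N → ℝ → ℝ} {c₁ c : ℝ}

theorem qp1 (S : Setup Ω s a β φm φp q qp f c₁ c) : 1 < qp := by
  obtain ⟨x, hx⟩ := S.hΩne
  exact (S.hq1 x hx).trans_le (S.hq2 x hx)

theorem half_mul (x : ℝ≥0∞) : 2 * (ENNReal.ofReal (1/2) * x) = x := by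
  rw [← mul_assoc, show (2:ℝ≥0∞) = ENNReal.ofReal 2 by simp, ← ENNReal.ofReal_mul (by norm_num)]
  simp

theorem rho_le (S : Setup Ω s a β φm φp q qp f c₁ c) {u : Eucl N → ℝ} (hu : Measurable u) :
    rhoS a s Ω β u ≤ 2 * En a s Ω β u := by
  rw [En_eq S.hY S.hG S.hβm S.hβ0 hu, mul_add, mul_add, half_mul]
  unfold rhoS
  gcongr <;> exact le_mul_of_one_le_left (zero_le) (by norm_num)

theorem En_le (S : Setup Ω s a β φm φp q qp f c₁ c) {u : Eucl N → ℝ} (hu : Measurable u) :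
    En a s Ω β u ≤ rhoS a s Ω β u := by
  rw [En_eq S.hY S.hG S.hβm S.hβ0 hu]
  unfold rhoS
  gcongr
  refine mul_le_of_le_one_left (zero_le) ?_
  rw [ENNReal.ofReal_le_one]; norm_num

theorem En_smul_ne (S : Setup Ω s a β φm φp q qp f c₁ c) {u : Eucl N → ℝ} (t : ℝ)
    (h : En a s Ω β u ≠ ⊤) : En a s Ω β (t • u) ≠ ⊤ := by
  have h1 : (1:ℝ) ≤ max 1 |t| := le_max_left _ _
  refine ne_top_of_le_ne_top (ENNReal.mul_ne_top (ENNReal.ofReal_ne_top) h)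
    (le_trans (Imod_mono S.hY ?_) (Imod_up S.hY h1 (TZ s u)))
  intro z
  rw [TZ_smul, abs_mul, abs_mul]
  exact mul_le_mul_of_nonneg_right ((le_max_right _ _).trans (le_abs_self _)) (abs_nonneg _)

theorem En_add_ne (S : Setup Ω s a β φm φp q qp f c₁ c) {u v : Eucl N → ℝ} (hu : Measurable u)
    (h : En a s Ω β u ≠ ⊤) (h' : En a s Ω β v ≠ ⊤) : En a s Ω β (u + v) ≠ ⊤ := by
  have e : TZ s (u + v) = fun z => TZ s u z + TZ s v z := funext fun z => TZ_add s u v z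
  unfold En
  rw [e]
  exact ne_top_of_le_ne_top (ENNReal.mul_ne_top ENNReal.ofReal_ne_top
    (ENNReal.add_ne_top.2 ⟨h, h'⟩)) (Imod_add S.hY S.hG (meas_TZ s hu))

theorem normM_le (S : Setup Ω s a β φm φp q qp f c₁ c) {u : Eucl N → ℝ} (hu : Measurable u)
    (h : En a s Ω β u ≠ ⊤) {L : ℝ} (hL : 1 ≤ L) (hE : 2 * (En a s Ω β u).toReal ≤ L ^ φm) :
    normM a s Ω β u ≤ ENNReal.ofReal L := by
  have hL0 : 0 < L := one_pos.trans_le hL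
  apply sInf_le
  refine ⟨L, hL0, rfl, ?_⟩
  have e : (fun x => u x / L) = L⁻¹ • u := by ext x; simp [div_eq_inv_mul]
  rw [e]
  refine (S.rho_le (hu.const_smul _)).trans ?_
  have h1 := Imod_dn (μ := muZ Ω β) S.hY hL (TZ s (L⁻¹ • u))
  have e2 : (fun z => L * TZ s (L⁻¹ • u) z) = TZ s u := by
    ext z; rw [TZ_smul, mul_inv_cancel_left₀ hL0.ne']
  rw [e2] at h1
  change ENNReal.ofReal (L ^ φm) * En a s Ω β (L⁻¹ • u) ≤ En a s Ω β u at h1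
  have hfin := S.En_smul_ne L⁻¹ h
  have hpos : 0 < L ^ φm := Real.rpow_pos_of_pos hL0 _
  have h2 := ENNReal.toReal_mono h h1
  rw [ENNReal.toReal_mul, ENNReal.toReal_ofReal hpos.le] at h2
  have h3 : 2 * (En a s Ω β (L⁻¹ • u)).toReal ≤ 1 := by
    have : L ^ φm * (2 * (En a s Ω β (L⁻¹ • u)).toReal) ≤ L ^ φm * 1 := by linarith
    exact le_of_mul_le_mul_left this hpos
  rw [← ENNReal.toReal_le_toReal (ENNReal.mul_ne_top (by simp) hfin) (by simp)]
  simpa using h3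

theorem self_le_rpow (S : Setup Ω s a β φm φp q qp f c₁ c) {L : ℝ} (hL : 1 ≤ L) : L ≤ L ^ φm := by
  simpa using Real.rpow_le_rpow_of_exponent_le hL S.hm.le

theorem mem_X (S : Setup Ω s a β φm φp q qp f c₁ c) {u : Eucl N → ℝ} :
    u ∈ XsetM a s Ω β ↔ Measurable u ∧ En a s Ω β u ≠ ⊤ := by
  constructor
  · rintro ⟨hu, ⟨L, hL, hrho⟩, -⟩
    refine ⟨hu, ?_⟩
    have e : (fun x => u x / L) = L⁻¹ • u := by ext x; simp [div_eq_inv_mul]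
    rw [e] at hrho
    have h1 : En a s Ω β (L⁻¹ • u) ≠ ⊤ :=
      ne_top_of_le_ne_top hrho.ne (S.En_le (hu.const_smul _))
    have := S.En_smul_ne L h1
    rwa [smul_smul, mul_inv_cancel₀ hL.ne', one_smul] at this
  · rintro ⟨hu, h⟩
    refine ⟨hu, ⟨1, one_pos, ?_⟩, ?_⟩
    · simp only [div_one]
      exact (S.rho_le hu).trans_lt (ENNReal.mul_lt_top (by simp) h.lt_top)
    · have hL : (1:ℝ) ≤ max 1 (2 * (En a s Ω β u).toReal) := le_max_left _ _
      exact (S.normM_le hu h hL ((le_max_right _ _).trans (S.self_le_rpow hL))).trans_lt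
        ENNReal.ofReal_lt_top

theorem X_comb (S : Setup Ω s a β φm φp q qp f c₁ c) {u v : Eucl N → ℝ} (t r : ℝ)
    (hu : u ∈ XsetM a s Ω β) (hv : v ∈ XsetM a s Ω β) : t • u + r • v ∈ XsetM a s Ω β := by
  rw [S.mem_X] at *
  exact ⟨(hu.1.const_smul t).add (hv.1.const_smul r), S.En_add_ne (hu.1.const_smul t)
    (S.En_smul_ne t hu.2) (S.En_smul_ne r hv.2)⟩

theorem modq_le (S : Setup Ω s a β φm φp q qp f c₁ c) {u : Eucl N → ℝ} {K : ℝ} (hK : 1 ≤ K)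
    (h : normq Ω q u < ENNReal.ofReal K) :
    ∫⁻ x in Ω, ENNReal.ofReal (|u x| ^ q x) ≤ ENNReal.ofReal (K ^ qp) := by
  obtain ⟨_, ⟨l, hl, rfl, hle⟩, hlt⟩ := sInf_lt_iff.1 h
  have hlK : l < K := (ENNReal.ofReal_lt_ofReal_iff (one_pos.trans_le hK)).1 hlt
  calc _ ≤ ∫⁻ x in Ω, ENNReal.ofReal (K ^ qp) * ENNReal.ofReal (|u x / l| ^ q x) := by
        apply setLIntegral_mono' S.hΩo.measurableSet
        intro x hx
        rw [← ENNReal.ofReal_mul (by positivity)]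
        apply ENNReal.ofReal_le_ofReal
        have hq := S.hq1 x hx
        have e : |u x| ^ q x = l ^ q x * |u x / l| ^ q x := by
          rw [← Real.mul_rpow hl.le (abs_nonneg _), abs_div, abs_of_pos hl,
            mul_div_cancel₀ _ hl.ne']
        rw [e]
        gcongr
        calc l ^ q x ≤ K ^ q x := by gcongr
          _ ≤ K ^ qp := Real.rpow_le_rpow_of_exponent_le hK (S.hq2 x hx)
    _ = ENNReal.ofReal (K ^ qp) * ∫⁻ x in Ω, ENNReal.ofReal (|u x / l| ^ q x) :=
        lintegral_const_mul' _ _ ENNReal.ofReal_ne_top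
    _ ≤ ENNReal.ofReal (K ^ qp) * 1 := by gcongr
    _ = _ := mul_one _

theorem modq_le' (S : Setup Ω s a β φm φp q qp f c₁ c) {u : Eucl N → ℝ} (hu : u ∈ XsetM a s Ω β) :
    ∫⁻ x in Ω, ENNReal.ofReal (|u x| ^ q x) ≤
      ENNReal.ofReal ((c + 1) ^ qp * (max 1 (2 * (En a s Ω β u).toReal)) ^ (qp / φm)) := by
  obtain ⟨hum, hE⟩ := S.mem_X.1 hu
  set M := max 1 (2 * (En a s Ω β u).toReal) with hM
  have hM1 : 1 ≤ M := le_max_left _ _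
  have hm0 : 0 < φm := one_pos.trans S.hm
  set L := M ^ (1/φm) with hL
  have hL1 : 1 ≤ L := Real.one_le_rpow hM1 (by positivity)
  have hLM : L ^ φm = M := by
    rw [hL, ← Real.rpow_mul (by positivity), one_div, inv_mul_cancel₀ hm0.ne', Real.rpow_one]
  have h1 := S.normM_le hum hE hL1 (by rw [hLM]; exact le_max_right _ _)
  have hc := S.hc
  have h2 : normq Ω q u < ENNReal.ofReal ((c + 1) * L) := by
    calc _ ≤ ENNReal.ofReal c * normM a s Ω β u := S.hemb u hu
      _ ≤ ENNReal.ofReal c * ENNReal.ofReal L := by gcongr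
      _ = ENNReal.ofReal (c * L) := (ENNReal.ofReal_mul hc.le).symm
      _ < _ := by
        rw [ENNReal.ofReal_lt_ofReal_iff (by positivity)]
        nlinarith
  have h3 := S.modq_le (by nlinarith : 1 ≤ (c+1) * L) h2
  convert h3 using 2
  rw [Real.mul_rpow (by positivity) (by positivity), hL, ← Real.rpow_mul (by positivity)]
  congr 2; ring

theorem q_int (S : Setup Ω s a β φm φp q qp f c₁ c) {u : Eucl N → ℝ} (hu : u ∈ XsetM a s Ω β) :
    Integrable (fun x => |u x| ^ q x) (volume.restrict Ω) ∧ ∫ x in Ω, |u x| ^ q x ≤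
      (c + 1) ^ qp * (max 1 (2 * (En a s Ω β u).toReal)) ^ (qp / φm) := by
  have hmeas : AEMeasurable (fun x => |u x| ^ q x) (volume.restrict Ω) :=
    hu.1.abs.aemeasurable.pow S.hqm
  have hnn : 0 ≤ᵐ[volume.restrict Ω] fun x => |u x| ^ q x := ae_of_all _ fun x => by positivity
  have h := S.modq_le' hu
  have hc := S.hc
  constructor
  · refine ⟨hmeas.aestronglyMeasurable, ?_⟩
    rw [hasFiniteIntegral_iff_ofReal hnn]
    exact h.trans_lt ENNReal.ofReal_lt_top
  · rw [integral_eq_lintegral_of_nonneg_ae hnn hmeas.aestronglyMeasurable]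
    exact ENNReal.toReal_le_of_le_ofReal (by positivity) h

theorem Ff0 (f : Eucl N → ℝ → ℝ) (x : Eucl N) : Ff f x 0 = 0 := by simp [Ff]

theorem Ff_le (S : Setup Ω s a β φm φp q qp f c₁ c) {x : Eucl N} (hx : x ∈ Ω) (t : ℝ) :
    |Ff f x t| ≤ c₁ * |t| ^ q x := by
  have hq := S.hq1 x hx
  have hc := S.hc₁
  have h := intervalIntegral.norm_integral_le_of_norm_le_const (a := 0) (b := t) (f := f x)
    (C := c₁ * |t| ^ (q x - 1)) (by
      intro τ hτ
      have hτt : |τ| ≤ |t| := by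
        rcases le_total 0 t with h | h
        · rw [uIoc_of_le h] at hτ; rw [abs_of_pos hτ.1, abs_of_nonneg h]; exact hτ.2
        · rw [uIoc_of_ge h] at hτ; rw [abs_of_nonpos hτ.2, abs_of_nonpos h]; linarith [hτ.1]
      refine (S.hf1 x hx τ).trans ?_
      gcongr)
  rw [sub_zero, Real.norm_eq_abs] at h
  refine h.trans (le_of_eq ?_)
  rw [mul_assoc]
  congr 1
  rcases eq_or_ne t 0 with rfl | ht
  · simp [Real.zero_rpow (by linarith : q x ≠ 0)]
  · rw [← Real.rpow_add_one (abs_ne_zero.2 ht)]; ring_nf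

theorem pow_sum_le (S : Setup Ω s a β φm φp q qp f c₁ c) {x : Eucl N} (hx : x ∈ Ω) (t r : ℝ) :
    (|t| + |r|) ^ q x ≤ 2 ^ qp * (|t| ^ q x + |r| ^ q x) := by
  have hq := S.hq1 x hx
  have h2 : (2:ℝ) ^ q x ≤ 2 ^ qp := Real.rpow_le_rpow_of_exponent_le (by norm_num) (S.hq2 x hx)
  have key : ∀ t r : ℝ, |t| ≤ |r| → (|t| + |r|) ^ q x ≤ 2 ^ qp * (|t| ^ q x + |r| ^ q x) := by
    intro t r h
    calc (|t| + |r|) ^ q x ≤ (2 * |r|) ^ q x := by gcongr; linarith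
      _ = 2 ^ q x * |r| ^ q x := Real.mul_rpow (by norm_num) (abs_nonneg _)
      _ ≤ 2 ^ qp * (|t| ^ q x + |r| ^ q x) := by
        gcongr
        have : 0 ≤ |t| ^ q x := by positivity
        linarith
  rcases le_total |t| |r| with h | h
  · exact key t r h
  · rw [add_comm, add_comm (|t| ^ q x)]; exact key r t h

theorem ae_Ω (S : Setup Ω s a β φm φp q qp f c₁ c) : ∀ᵐ x ∂(volume.restrict Ω), x ∈ Ω :=
  ae_restrict_mem S.hΩo.measurableSet

theorem F_int (S : Setup Ω s a β φm φp q qp f c₁ c) {u : Eucl N → ℝ} (hu : u ∈ XsetM a s Ω β) :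
    Integrable (fun x => Ff f x (u x)) (volume.restrict Ω) := by
  refine ((S.q_int hu).1.const_mul c₁).mono' (meas_comp S.hF hu.1).aestronglyMeasurable ?_
  filter_upwards [S.ae_Ω] with x hx using S.Ff_le hx _

theorem F_int_le (S : Setup Ω s a β φm φp q qp f c₁ c) {u : Eucl N → ℝ} (hu : u ∈ XsetM a s Ω β) :
    ∫ x in Ω, Ff f x (u x) ≤ c₁ * ∫ x in Ω, |u x| ^ q x := by
  rw [← integral_const_mul]
  apply integral_mono_ae (S.F_int hu) ((S.q_int hu).1.const_mul c₁)
  filter_upwards [S.ae_Ω] with x hx using (le_abs_self _).trans (S.Ff_le hx _)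

theorem F_deriv (S : Setup Ω s a β φm φp q qp f c₁ c) {u v : Eucl N → ℝ}
    (hu : u ∈ XsetM a s Ω β) (hv : v ∈ XsetM a s Ω β) :
    HasDerivAt (fun t : ℝ => ∫ x in Ω, Ff f x (u x + t * v x)) (∫ x in Ω, f x (u x) * v x) 0 := by
  have hc := S.hc₁
  have key := hasDerivAt_integral_of_dominated_loc_of_deriv_le (μ := volume.restrict Ω)
    (x₀ := (0:ℝ))
    (F := fun t x => Ff f x (u x + t * v x)) (F' := fun t x => f x (u x + t * v x) * v x)
    (s := Metric.ball (0:ℝ) 1)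
    (bound := fun x => c₁ * (2 ^ qp * (|u x| ^ q x + |v x| ^ q x)))
    (Metric.ball_mem_nhds _ one_pos)
    (Eventually.of_forall fun t =>
      (meas_comp S.hF (hu.1.add (hv.1.const_mul t))).aestronglyMeasurable)
    (by simpa using S.F_int hu)
    ((meas_comp S.hf (hu.1.add (hv.1.const_mul 0))).mul hv.1).aestronglyMeasurable
    (by
      filter_upwards [S.ae_Ω] with x hx t ht
      rw [Metric.mem_ball, dist_zero_right, Real.norm_eq_abs] at ht
      have hq := S.hq1 x hx
      have h1 : |u x + t * v x| ≤ |u x| + |v x| := by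
        calc _ ≤ |u x| + |t * v x| := abs_add_le _ _
          _ ≤ _ := by rw [abs_mul]; nlinarith [abs_nonneg (v x)]
      rw [Real.norm_eq_abs, abs_mul]
      calc |f x (u x + t * v x)| * |v x|
          ≤ (c₁ * (|u x| + |v x|) ^ (q x - 1)) * (|u x| + |v x|) := by
            refine mul_le_mul ((S.hf1 x hx _).trans ?_) (by linarith [abs_nonneg (u x)])
              (abs_nonneg _) (by positivity)
            gcongr
        _ = c₁ * (|u x| + |v x|) ^ q x := by
            rw [mul_assoc]
            congr 1
            rcases eq_or_ne (|u x| + |v x|) 0 with h0 | h0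
            · rw [h0, Real.zero_rpow (by linarith : q x ≠ 0), mul_zero]
            · rw [← Real.rpow_add_one h0]; ring_nf
        _ ≤ _ := by gcongr; exact S.pow_sum_le hx _ _)
    ((((S.q_int hu).1.add (S.q_int hv).1).const_mul _).const_mul _)
    (ae_of_all _ fun x t ht => by
      have h2 : HasDerivAt (fun t : ℝ => u x + t * v x) (v x) t := by
        simpa using (hasDerivAt_mul_const (x := t) (v x)).const_add (u x)
      exact (S.hfd x _).comp t h2)
  simpa using key.2

theorem coercive (S : Setup Ω s a β φm φp q qp f c₁ c) {lam : ℝ} (hlam : 0 ≤ lam) :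
    ∃ C, ∀ u ∈ XsetM a s Ω β, (En a s Ω β u).toReal / 2 - C ≤ Jr a s Ω β f lam u := by
  have hc := S.hc
  have hc₁ := S.hc₁
  have hqp := S.qp1
  have hm0 : 0 < φm := one_pos.trans S.hm
  set D := lam * (c₁ * (c+1) ^ qp) with hD
  have hD0 : 0 ≤ D := by positivity
  set θ := qp / φm with hθ
  have hθ0 : 0 < θ := by positivity
  have hθ1 : θ < 1 := (div_lt_one hm0).2 S.hqpφ
  have hlim : Tendsto (fun t : ℝ => D * t ^ (-(1-θ))) atTop (nhds 0) := by
    simpa using (tendsto_rpow_neg_atTop (by linarith : 0 < 1 - θ)).const_mul D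
  obtain ⟨B, hB⟩ := (hlim.eventually_lt_const (by norm_num : (0:ℝ) < 1/4)).exists_forall_of_atTop
  set B' := max B 1
  have hB' : 1 ≤ B' := le_max_right _ _
  have hmain : ∀ M : ℝ, 1 ≤ M → D * M ^ θ ≤ M / 4 + D * B' ^ θ := by
    intro M hM
    have hM0 : 0 < M := by linarith
    rcases le_total M B' with h | h
    · have : D * M ^ θ ≤ D * B' ^ θ := by gcongr
      linarith
    · have h1 := hB M ((le_max_left _ _).trans h)
      have e : M ^ θ = M ^ (-(1-θ)) * M := by
        rw [← Real.rpow_add_one hM0.ne']; ring_nf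
      have : 0 ≤ D * B' ^ θ := by positivity
      rw [e, ← mul_assoc]
      nlinarith
  refine ⟨1/4 + D * B' ^ θ, fun u hu => ?_⟩
  have h1 := S.F_int_le hu
  have h2 := (S.q_int hu).2
  have hE : 0 ≤ (En a s Ω β u).toReal := ENNReal.toReal_nonneg
  set E := (En a s Ω β u).toReal with hE'
  have h3 := hmain (max 1 (2 * E)) (le_max_left _ _)
  have h4 : max 1 (2 * E) ≤ 1 + 2 * E := max_le (by linarith) (by linarith)
  have h5 : lam * ∫ x in Ω, Ff f x (u x) ≤ D * (max 1 (2*E)) ^ θ := by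
    calc _ ≤ lam * (c₁ * ((c+1)^qp * (max 1 (2*E)) ^ θ)) := by
          gcongr
          exact h1.trans (by gcongr)
      _ = _ := by rw [hD]; ring
  unfold Jr
  rw [← hE']
  linarith

end Setup

namespace Setup
variable {Ω : Set (Eucl N)} {s : ℝ} {a : Eucl N → Eucl N → ℝ → ℝ} {β : Eucl N → ℝ}
    {φm φp : ℝ} {q : Eucl N → ℝ} {qp : ℝ} {f : Eucl N → ℝ → ℝ} {c₁ c : ℝ}

theorem F_tend (S : Setup Ω s a β φm φp q qp f c₁ c) {V : ℕ → Eucl N → ℝ}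
    (hV : ∀ n, V n ∈ XsetM a s Ω β) {w : Eucl N → ℝ} (hw : w ∈ XsetM a s Ω β)
    {h : Eucl N → ℝ} (hh : Integrable h (volume.restrict Ω))
    (hb : ∀ n, ∀ᵐ x ∂(volume.restrict Ω), |V n x - w x| ^ q x ≤ h x)
    (hl : ∀ᵐ x ∂(volume.restrict Ω), Tendsto (fun n => V n x) atTop (nhds (w x))) :
    Tendsto (fun n => ∫ x in Ω, Ff f x (V n x)) atTop (nhds (∫ x in Ω, Ff f x (w x))) := by
  have hc := S.hc₁
  refine tendsto_integral_of_dominated_convergence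
    (fun x => c₁ * (2 ^ qp * (h x + |w x| ^ q x)))
    (fun n => (meas_comp S.hF (hV n).1).aestronglyMeasurable)
    (((hh.add (S.q_int hw).1).const_mul _).const_mul _) ?_ ?_
  · intro n
    filter_upwards [S.ae_Ω, hb n] with x hx hbx
    have hq := S.hq1 x hx
    rw [Real.norm_eq_abs]
    calc |Ff f x (V n x)| ≤ c₁ * |V n x| ^ q x := S.Ff_le hx _
      _ ≤ c₁ * (|V n x - w x| + |w x|) ^ q x := by
        have : |V n x| ≤ |V n x - w x| + |w x| := by
          simpa using abs_add_le (V n x - w x) (w x)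
        gcongr
      _ ≤ c₁ * (2 ^ qp * (|V n x - w x| ^ q x + |w x| ^ q x)) := by
        gcongr; exact S.pow_sum_le hx _ _
      _ ≤ _ := by gcongr
  · filter_upwards [hl] with x hx
    exact ((S.hfd x (w x)).continuousAt.tendsto).comp hx

theorem q_sub (S : Setup Ω s a β φm φp q qp f c₁ c) {u w : Eucl N → ℝ}
    (hu : u ∈ XsetM a s Ω β) (hw : w ∈ XsetM a s Ω β) :
    Integrable (fun x => |u x - w x| ^ q x) (volume.restrict Ω) := by
  have h := (S.q_int (S.X_comb 1 (-1) hu hw)).1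
  simpa [sub_eq_add_neg] using h

theorem dominate (S : Setup Ω s a β φm φp q qp f c₁ c) {U : ℕ → Eucl N → ℝ}
    (hU : ∀ n, U n ∈ XsetM a s Ω β) {w : Eucl N → ℝ} (hw : w ∈ XsetM a s Ω β)
    (hk : ∀ k, ∫ x in Ω, |U k x - w x| ^ q x ≤ (1/2:ℝ) ^ k) :
    ∃ h : Eucl N → ℝ, Integrable h (volume.restrict Ω) ∧
      ∀ᵐ x ∂(volume.restrict Ω), (∀ k, |U k x - w x| ^ q x ≤ h x) ∧
        Tendsto (fun k => U k x) atTop (nhds (w x)) := by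
  set g : ℕ → Eucl N → ℝ≥0∞ := fun k x => ENNReal.ofReal (|U k x - w x| ^ q x) with hg
  have hgm : ∀ k, AEMeasurable (g k) (volume.restrict Ω) := fun k =>
    (S.q_sub (hU k) hw).1.aemeasurable.ennreal_ofReal
  have hsum : ∫⁻ x in Ω, ∑' k, g k x ≠ ⊤ := by
    rw [lintegral_tsum hgm]
    have : ∀ k, ∫⁻ x in Ω, g k x ≤ ENNReal.ofReal ((1/2:ℝ)^k) := by
      intro k
      rw [← ofReal_integral_eq_lintegral_ofReal (S.q_sub (hU k) hw)
        (ae_of_all _ fun x => by positivity)]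
      exact ENNReal.ofReal_le_ofReal (hk k)
    refine ne_top_of_le_ne_top ?_ (ENNReal.tsum_le_tsum this)
    rw [← ENNReal.ofReal_tsum_of_nonneg (fun k => by positivity) summable_geometric_two]
    exact ENNReal.ofReal_ne_top
  have hm : AEMeasurable (fun x => ∑' k, g k x) (volume.restrict Ω) := AEMeasurable.tsum hgm
  refine ⟨fun x => (∑' k, g k x).toReal, integrable_toReal_of_lintegral_ne_top hm hsum, ?_⟩
  filter_upwards [ae_lt_top' hm hsum, S.ae_Ω] with x hx hxΩ
  have hq := S.hq1 x hxΩ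
  refine ⟨fun k => ?_, ?_⟩
  · have := ENNReal.toReal_mono hx.ne (ENNReal.le_tsum (f := fun k => g k x) k)
    simpa [hg, ENNReal.toReal_ofReal (by positivity : 0 ≤ |U k x - w x| ^ q x)] using this
  · have h1 := ENNReal.tendsto_atTop_zero_of_tsum_ne_top hx.ne
    have h2 : Tendsto (fun k => |U k x - w x| ^ q x) atTop (nhds 0) := by
      have := (ENNReal.tendsto_toReal ENNReal.zero_ne_top).comp h1
      refine this.congr fun k => ?_
      simp [hg, ENNReal.toReal_ofReal (by positivity : 0 ≤ |U k x - w x| ^ q x)]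
    have h3 := h2.rpow_const (p := (q x)⁻¹) (Or.inr (by positivity))
    rw [Real.zero_rpow (by positivity)] at h3
    rw [tendsto_iff_norm_sub_tendsto_zero]
    refine h3.congr fun k => ?_
    rw [Real.norm_eq_abs, ← Real.rpow_mul (abs_nonneg _), mul_inv_cancel₀ (by positivity),
      Real.rpow_one]

theorem hull_le {U : ℕ → Eucl N → ℝ} {n : ℕ} {V : Eucl N → ℝ}
    (hV : V ∈ convexHull ℝ (U '' Ici n)) {x : Eucl N} {w r : ℝ}
    (h : ∀ k ≥ n, |U k x - w| ≤ r) : |V x - w| ≤ r := by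
  have hc : Convex ℝ {g : Eucl N → ℝ | g x ∈ Metric.closedBall w r} :=
    (convex_closedBall w r).linear_preimage (LinearMap.proj (R := ℝ) (φ := fun _ : Eucl N => ℝ) x)
  have := convexHull_min (t := {g : Eucl N → ℝ | g x ∈ Metric.closedBall w r}) (by
    rintro _ ⟨k, hk, rfl⟩
    simpa [Real.dist_eq] using h k hk) hc hV
  simpa [Real.dist_eq] using this

theorem hull_dom (S : Setup Ω s a β φm φp q qp f c₁ c) {U V : ℕ → Eucl N → ℝ} {w h : Eucl N → ℝ}
    (hV : ∀ n, V n ∈ convexHull ℝ (U '' Ici n))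
    (hd : ∀ᵐ x ∂(volume.restrict Ω), (∀ k, |U k x - w x| ^ q x ≤ h x) ∧
        Tendsto (fun k => U k x) atTop (nhds (w x))) :
    ∀ᵐ x ∂(volume.restrict Ω), (∀ k, |V k x - w x| ^ q x ≤ h x) ∧
        Tendsto (fun k => V k x) atTop (nhds (w x)) := by
  filter_upwards [hd, S.ae_Ω] with x ⟨hx, hl⟩ hxΩ
  have hq := S.hq1 x hxΩ
  have hq0 : 0 < q x := by linarith
  constructor
  · intro k
    have h0 : 0 ≤ h x := le_trans (by positivity) (hx 0)
    have : |V k x - w x| ≤ h x ^ (q x)⁻¹ := hull_le (hV k) fun j _ =>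
      (Real.le_rpow_inv_iff_of_pos (abs_nonneg _) h0 hq0).2 (hx j)
    exact (Real.le_rpow_inv_iff_of_pos (abs_nonneg _) h0 hq0).1 this
  · rw [Metric.tendsto_atTop] at hl ⊢
    intro ε hε
    obtain ⟨n, hn⟩ := hl (ε/2) (by positivity)
    refine ⟨n, fun m hm => ?_⟩
    have : |V m x - w x| ≤ ε/2 := hull_le (hV m) fun j hj =>
      (hn j (le_trans hm hj)).le
    rw [Real.dist_eq]; linarith

theorem convX (S : Setup Ω s a β φm φp q qp f c₁ c) : Convex ℝ (XsetM a s Ω β) := by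
  intro u hu v hv t r _ _ _
  exact S.X_comb t r hu hv

theorem En_cl (S : Setup Ω s a β φm φp q qp f c₁ c) {u v : Eucl N → ℝ}
    (hu : u ∈ XsetM a s Ω β) (hv : v ∈ XsetM a s Ω β) :
    (En a s Ω β ((1/2:ℝ) • (u + v))).toReal + (En a s Ω β ((1/2:ℝ) • (u - v))).toReal ≤
      ((En a s Ω β u).toReal + (En a s Ω β v).toReal) / 2 := by
  have h := Imod_cl_real (μ := muZ Ω β) S.hY S.hG (meas_TZ s hu.1) (meas_TZ s hv.1)
    (S.mem_X.1 hu).2 (S.mem_X.1 hv).2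
  have e1 : TZ s ((1/2:ℝ) • (u + v)) = fun z => (TZ s u z + TZ s v z) / 2 := by
    ext z; rw [TZ_smul, TZ_add]; ring
  have e2 : TZ s ((1/2:ℝ) • (u - v)) = fun z => (TZ s u z - TZ s v z) / 2 := by
    ext z; rw [TZ_smul, TZ_sub]; ring
  unfold En
  rw [e1, e2]
  exact h

theorem minimizer (S : Setup Ω s a β φm φp q qp f c₁ c)
    (hcpt : ∀ un : ℕ → Eucl N → ℝ, (∀ n, un n ∈ XsetM a s Ω β) →
      (∃ B : ℝ, ∀ n, normM a s Ω β (un n) ≤ ENNReal.ofReal B) →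
      ∃ ns : ℕ → ℕ, StrictMono ns ∧ ∃ w ∈ XsetM a s Ω β,
        Tendsto (fun k => ∫ x in Ω, |un (ns k) x - w x| ^ q x) atTop (nhds 0))
    (hne : (XsetM a s Ω β).Nonempty) {lam : ℝ} (hlam : 0 ≤ lam) :
    ∃ u ∈ XsetM a s Ω β, ∀ v ∈ XsetM a s Ω β, Jr a s Ω β f lam u ≤ Jr a s Ω β f lam v := by
  obtain ⟨C, hC⟩ := S.coercive hlam
  have hbdd : BddBelow (Jr a s Ω β f lam '' XsetM a s Ω β) := by
    refine ⟨-C, ?_⟩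
    rintro _ ⟨u, hu, rfl⟩
    have := hC u hu
    have h0 : 0 ≤ (En a s Ω β u).toReal := ENNReal.toReal_nonneg
    linarith
  obtain ⟨j, hjanti, hjlim, hjmem⟩ := exists_seq_tendsto_sInf (hne.image (Jr a s Ω β f lam)) hbdd
  set m0 := sInf (Jr a s Ω β f lam '' XsetM a s Ω β) with hm0
  choose u₁ hu₁ hju₁ using hjmem
  set B := 2 * (j 0 + C) with hB
  have hEB : ∀ n, (En a s Ω β (u₁ n)).toReal ≤ B := by
    intro n
    have h1 := hC _ (hu₁ n)
    have h2 := hjanti (Nat.zero_le n)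
    rw [hju₁] at h1
    linarith
  obtain ⟨ns, hns, w, hw, hlim⟩ := hcpt u₁ hu₁ ⟨max 1 (2 * B), fun n => by
    have hL : (1:ℝ) ≤ max 1 (2*B) := le_max_left _ _
    refine S.normM_le (hu₁ n).1 (S.mem_X.1 (hu₁ n)).2 hL (le_trans ?_ (S.self_le_rpow hL))
    exact le_trans (by linarith [hEB n]) (le_max_right _ _)⟩
  obtain ⟨θ, hθ, hθ'⟩ := extraction_forall_of_eventually'
    (P := fun k n => ∫ x in Ω, |u₁ (ns n) x - w x| ^ q x ≤ (1/2:ℝ) ^ k)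
    (fun k => eventually_atTop.1 (hlim.eventually_le_const (show (0:ℝ) < (1/2)^k by positivity)))
  set U : ℕ → Eucl N → ℝ := fun k => u₁ (ns (θ k)) with hUdef
  have hU : ∀ k, U k ∈ XsetM a s Ω β := fun k => hu₁ _
  obtain ⟨h, hh, hd⟩ := S.dominate hU hw hθ'
  have hFU := S.F_tend hU hw hh (fun n => hd.mono fun x hx => hx.1 n) (hd.mono fun x hx => hx.2)
  set e0 := m0 + lam * ∫ x in Ω, Ff f x (w x) with he0
  have hE0 : Tendsto (fun k => (En a s Ω β (U k)).toReal) atTop (nhds e0) := by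
    have h1 : Tendsto (fun k => j (ns (θ k))) atTop (nhds m0) :=
      hjlim.comp (hns.comp hθ).tendsto_atTop
    refine (h1.add (hFU.const_mul lam)).congr fun k => ?_
    rw [← hju₁]
    simp only [Jr, hUdef]
    ring
  obtain ⟨v, hv1, hv2, hv3⟩ := exists_hull_cauchy (fun u => (En a s Ω β u).toReal)
    (fun _ => ENNReal.toReal_nonneg) (XsetM a s Ω β) S.convX (fun u hu v hv => S.En_cl hu hv)
    U hU B (fun n => hEB _)
  have hvX : ∀ n, v n ∈ XsetM a s Ω β := fun n =>
    convexHull_min (by rintro _ ⟨k, -, rfl⟩; exact hU k) S.convX (hv1 n)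
  have hvd := S.hull_dom hv1 hd
  have hp0 : ∀ k : ℕ, 0 < (((2:ℝ) ^ (k+1)) ^ φp)⁻¹ * (1/2:ℝ) ^ k := fun k => by positivity
  obtain ⟨ψ, hψ, hψ'⟩ := extraction_forall_of_eventually'
    (P := fun k n => ∀ l ≥ n, (En a s Ω β ((1/2:ℝ) • (v l - v n))).toReal ≤
      (((2:ℝ) ^ (k+1)) ^ φp)⁻¹ * (1/2:ℝ) ^ k)
    (fun k => hv3 _ (hp0 k))
  have hcau := Imod_cauchy (μ := muZ Ω β) (w := fun k => TZ s (v (ψ k))) S.hY S.hG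
    (fun k => meas_TZ s (hvX _).1) (by
      intro k
      have h1 := hψ' k (ψ (k+1)) (hψ (Nat.lt_succ_self k)).le
      have e : TZ s ((1/2:ℝ) • (v (ψ (k+1)) - v (ψ k))) =
          fun z => (TZ s (v (ψ (k+1))) z - TZ s (v (ψ k)) z) / 2 := by
        ext z; rw [TZ_smul, TZ_sub]; ring
      rw [← e]
      have hX : (1/2:ℝ) • (v (ψ (k+1)) - v (ψ k)) ∈ XsetM a s Ω β := by
        have := S.X_comb (1/2) (-(1/2)) (hvX (ψ (k+1))) (hvX (ψ k))
        rwa [neg_smul, ← sub_eq_add_neg, ← smul_sub] at this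
      change En a s Ω β _ ≤ _
      rw [← ENNReal.ofReal_toReal (S.mem_X.1 hX).2]
      exact ENNReal.ofReal_le_ofReal h1)
  have hconv := ae_conv S.hΩo S.hΩne hcau
  obtain ⟨u₀, hu₀m, hu₀⟩ := measurable_limit_of_tendsto_metrizable_ae (μ := volume) (L := atTop)
    (fun k => (hvX (ψ k)).1.aemeasurable) hconv
  have hr : Tendsto (fun k => (En a s Ω β (U (ψ k))).toReal + 1 / (((ψ k : ℕ) : ℝ) + 1)) atTop
      (nhds e0) := by
    have := (hE0.add tendsto_one_div_add_atTop_nhds_zero_nat).comp hψ.tendsto_atTop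
    rw [add_zero] at this
    exact this
  have hEn := Imod_fatou (μ := muZ Ω β) S.hY S.hG (fun k => meas_TZ s (hvX (ψ k)).1)
    (ae_TZ hu₀) hr (fun k => by
      change En a s Ω β _ ≤ _
      rw [← ENNReal.ofReal_toReal (S.mem_X.1 (hvX (ψ k))).2]
      exact ENNReal.ofReal_le_ofReal (hv2 _))
  change En a s Ω β u₀ ≤ _ at hEn
  have hu₀X : u₀ ∈ XsetM a s Ω β :=
    S.mem_X.2 ⟨hu₀m, ne_top_of_le_ne_top ENNReal.ofReal_ne_top hEn⟩
  have he0' : 0 ≤ e0 := ge_of_tendsto' hE0 fun _ => ENNReal.toReal_nonneg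
  have hEr : (En a s Ω β u₀).toReal ≤ e0 := ENNReal.toReal_le_of_le_ofReal he0' hEn
  have hFeq : ∫ x in Ω, Ff f x (u₀ x) = ∫ x in Ω, Ff f x (w x) := by
    apply integral_congr_ae
    filter_upwards [ae_restrict_of_ae hu₀, hvd] with x h1 h2
    rw [tendsto_nhds_unique h1 (h2.2.comp hψ.tendsto_atTop)]
  refine ⟨u₀, hu₀X, fun v' hv' => ?_⟩
  have h1 : m0 ≤ Jr a s Ω β f lam v' := csInf_le hbdd ⟨v', hv', rfl⟩
  have h2 : Jr a s Ω β f lam u₀ ≤ m0 := by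
    unfold Jr; rw [hFeq]; linarith
  exact h2.trans h1

theorem euler (S : Setup Ω s a β φm φp q qp f c₁ c) (hs : 0 < s) {lam : ℝ} {u v : Eucl N → ℝ}
    (hu : u ∈ XsetM a s Ω β) (hv : v ∈ XsetM a s Ω β)
    (hmin : ∀ v ∈ XsetM a s Ω β, Jr a s Ω β f lam u ≤ Jr a s Ω β f lam v) :
    Aform a s Ω β u v = lam * ∫ x in Ω, f x (u x) * v x := by
  have hp : 0 ≤ φp := by linarith [S.hm, S.hmp]
  obtain ⟨hi, hd⟩ := Imod_deriv (μ := muZ Ω β) S.hY hp S.hG S.hg (meas_TZ s hu.1)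
    (meas_TZ s hv.1) (S.mem_X.1 hu).2 (S.mem_X.1 hv).2
  have hF := S.F_deriv hu hv
  have e : ∀ t : ℝ, (∫ z, GZ a z (TZ s u z + t * TZ s v z) ∂(muZ Ω β))
      - lam * ∫ x in Ω, Ff f x (u x + t * v x) = Jr a s Ω β f lam (u + t • v) := by
    intro t
    have e1 : TZ s (u + t • v) = fun z => TZ s u z + t * TZ s v z := by
      ext z; rw [TZ_add, TZ_smul]
    rw [Imod_integral S.hY S.hG (w := fun z => TZ s u z + t * TZ s v z)
      ((meas_TZ s hu.1).add ((meas_TZ s hv.1).const_mul t))]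
    unfold Jr En
    rw [e1]
    rfl
  have hD := hd.sub (hF.const_mul lam)
  have hmin' : IsLocalMin ((fun t : ℝ => ∫ z, GZ a z (TZ s u z + t * TZ s v z) ∂(muZ Ω β))
      - fun t : ℝ => lam * ∫ x in Ω, Ff f x (u x + t * v x)) 0 := by
    refine Eventually.of_forall fun t => ?_
    simp only [Pi.sub_apply]
    rw [e, e]
    have h1 := hmin (u + t • v) (by simpa using S.X_comb 1 t hu hv)
    simpa using h1
  have h0 := hmin'.hasDerivAt_eq_zero hD
  rw [Aform_eq S.hβm S.hβ0 hs hi] at h0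
  linarith

theorem Jlam_eq (S : Setup Ω s a β φm φp q qp f c₁ c) {lam : ℝ} {u : Eucl N → ℝ}
    (hu : u ∈ XsetM a s Ω β) : Jlam a s Ω β f lam u = Jr a s Ω β f lam u := by
  obtain ⟨hum, hE⟩ := S.mem_X.1 hu
  unfold Jlam Jr
  rw [En_eq S.hY S.hG S.hβm S.hβ0 hum] at hE ⊢
  obtain ⟨h12, h3⟩ := ENNReal.add_ne_top.1 hE
  obtain ⟨h1, h2⟩ := ENNReal.add_ne_top.1 h12
  rw [ENNReal.toReal_add h12 h3, ENNReal.toReal_add h1 h2, ENNReal.toReal_mul,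
    ENNReal.toReal_ofReal (by norm_num)]

end Setup

/-- existence of a nontrivial weak solution of the Neumann–Robin problem
for every large `λ`. -/
theorem statement15
    (N : ℕ) (hN : 1 ≤ N)
    (Ω : Set (Eucl N)) (hΩo : IsOpen Ω) (hΩb : Bornology.IsBounded Ω) (hΩne : Ω.Nonempty)
    (s : ℝ) (hs : s ∈ Set.Ioo (0:ℝ) 1)
    (a : Eucl N → Eucl N → ℝ → ℝ)
    (ha : Measurable fun p : Eucl N × Eucl N × ℝ => a p.1 p.2.1 p.2.2)
    (hmono : ∀ x y, StrictMono (phiF a x y))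
    (hcont : ∀ x y, Continuous (phiF a x y))
    (hsurj : ∀ x y, Function.Surjective (phiF a x y))
    (β : Eucl N → ℝ) (hβm : Measurable β)
    (hβb : ∃ C : ℝ, ∀ᵐ x ∂(volume.restrict Ωᶜ), |β x| ≤ C)
    (hβ0 : ∀ᵐ x ∂(volume.restrict Ωᶜ), 0 ≤ β x)
    (φm φp : ℝ) (hφm : 1 < φm) (hφmp : φm ≤ φp)
    (hΦ1 : ∀ x y t, 0 < t →
      φm ≤ t * phiF a x y t / PhiF a x y t ∧ t * phiF a x y t / PhiF a x y t ≤ φp)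
    (hΦ2 : ∀ x y : Eucl N, ConvexOn ℝ (Set.Ici 0) fun t => PhiF a x y (Real.sqrt t))
    (hΦ3 : ∃ C : ℝ, ∀ x y : Eucl N, PhiF a x y 1 ≤ C)
    (hsym : ∀ x y t, a x y t = a y x t)
    (q : Eucl N → ℝ) (hqc : ContinuousOn q (closure Ω)) (hq1 : ∀ x ∈ closure Ω, 1 < q x)
    (qp : ℝ) (hqp_le : ∀ x ∈ closure Ω, q x ≤ qp)
    (f : Eucl N → ℝ → ℝ)
    (hfmeas : ∀ t : ℝ, Measurable fun x => f x t)
    (hfcont : ∀ x : Eucl N, Continuous fun t => f x t)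
    (c₁ c₂ : ℝ) (hc₁ : 0 < c₁) (hc₂ : 0 < c₂)
    (hf1 : ∀ x ∈ Ω, ∀ t : ℝ, |f x t| ≤ c₁ * |t| ^ (q x - 1))
    (hf2 : ∀ x ∈ Ω, ∀ t : ℝ, c₂ * |t| ^ q x ≤ Ff f x t)
    (hqpφ : qp < φm)
    (c : ℝ) (hc : 0 < c)
    (hemb : ∀ u ∈ XsetM a s Ω β, normq Ω q u ≤ ENNReal.ofReal c * normM a s Ω β u)
    (hcpt : ∀ un : ℕ → Eucl N → ℝ, (∀ n, un n ∈ XsetM a s Ω β) →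
      (∃ B : ℝ, ∀ n, normM a s Ω β (un n) ≤ ENNReal.ofReal B) →
      ∃ ns : ℕ → ℕ, StrictMono ns ∧ ∃ w ∈ XsetM a s Ω β,
        Tendsto (fun k => ∫ x in Ω, |un (ns k) x - w x| ^ q x) atTop (nhds 0))
    (hind : (Ω.indicator fun _ => (1:ℝ)) ∈ XsetM a s Ω β) :
    ∃ lamstar : ℝ, 0 < lamstar ∧ ∀ lam : ℝ, lamstar ≤ lam →
      ∃ u ∈ XsetM a s Ω β, ¬ (u =ᵐ[volume] (fun _ => (0:ℝ))) ∧
        Jlam a s Ω β f lam u < 0 ∧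
        ∀ v ∈ XsetM a s Ω β, Aform a s Ω β u v = lam * ∫ x in Ω, f x (u x) * v x := by
  have S : Setup Ω s a β φm φp q qp f c₁ c :=
    { hΩo := hΩo
      hΩne := hΩne
      hY := fun z => yf_phi a _ _ φm φp hφm (hmono _ _) (hcont _ _) (hΦ1 _ _) (hΦ2 _ _)
      hG := meas_GZ ha hcont
      hg := meas_gZ ha
      hβm := hβm
      hβ0 := hβ0
      hm := hφm
      hmp := hφmp
      hqm := (hqc.mono subset_closure).aemeasurable hΩo.measurableSet
      hq1 := fun x hx => hq1 x (subset_closure hx)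
      hq2 := fun x hx => hqp_le x (subset_closure hx)
      hf := meas_of_carath hfcont hfmeas
      hF := meas_prim hfcont (meas_of_carath hfcont hfmeas)
      hfd := fun x t => intervalIntegral.integral_hasDerivAt_right
        ((hfcont x).intervalIntegrable _ _) ((hfcont x).stronglyMeasurableAtFilter _ _)
        (hfcont x).continuousAt
      hc₁ := hc₁
      hf1 := hf1
      hqpφ := hqpφ
      hc := hc
      hemb := hemb }
  set χ : Eucl N → ℝ := Ω.indicator fun _ => (1:ℝ) with hχ
  have hvol0 : 0 < (volume Ω).toReal :=
    ENNReal.toReal_pos (hΩo.measure_pos volume hΩne).ne' hΩb.measure_lt_top.ne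
  have hE0 : 0 ≤ (En a s Ω β χ).toReal := ENNReal.toReal_nonneg
  refine ⟨(En a s Ω β χ).toReal / (c₂ * (volume Ω).toReal) + 1, by positivity, ?_⟩
  intro lam hlam
  have hlam0 : 0 ≤ lam := le_trans (by positivity) hlam
  obtain ⟨u, hu, hmin⟩ := S.minimizer hcpt ⟨χ, hind⟩ hlam0
  have hχF : c₂ * (volume Ω).toReal ≤ ∫ x in Ω, Ff f x (χ x) := by
    have h1 : ∫ _ in Ω, c₂ = c₂ * (volume Ω).toReal := by
      rw [setIntegral_const, smul_eq_mul, mul_comm]; rfl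
    rw [← h1]
    refine integral_mono_ae (integrableOn_const hΩb.measure_lt_top.ne) (S.F_int hind) ?_
    filter_upwards [S.ae_Ω] with x hx
    have h2 := hf2 x hx 1
    have h3 : χ x = 1 := by rw [hχ, indicator_of_mem hx]
    rw [h3]
    simpa using h2
  have hJχ : Jr a s Ω β f lam χ < 0 := by
    unfold Jr
    have hpos : 0 < c₂ * (volume Ω).toReal := by positivity
    have h1 : ((En a s Ω β χ).toReal / (c₂ * (volume Ω).toReal) + 1) * (c₂ * (volume Ω).toReal)
        ≤ lam * ∫ x in Ω, Ff f x (χ x) := mul_le_mul hlam hχF hpos.le hlam0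
    rw [add_mul, div_mul_cancel₀ _ hpos.ne', one_mul] at h1
    linarith
  have hJu : Jr a s Ω β f lam u < 0 := (hmin χ hind).trans_lt hJχ
  refine ⟨u, hu, ?_, ?_, fun v hv => S.euler hs.1 hu hv hmin⟩
  · intro h0
    have hF0 : ∫ x in Ω, Ff f x (u x) = 0 := by
      apply integral_eq_zero_of_ae
      filter_upwards [ae_restrict_of_ae h0] with x hx
      rw [hx, Setup.Ff0]
      rfl
    unfold Jr at hJu
    rw [hF0, mul_zero, sub_zero] at hJu
    exact absurd hJu (not_lt.2 ENNReal.toReal_nonneg)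
  · rw [S.Jlam_eq hu]
    exact hJu
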